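/- There exist constants c > 0 and C < ∞, depending only on d, with the following property: if ε > 0 and E ⊆ ℝ^d is a Lebesgue measurable set of positive finite measure satisfying ‖T(χ_E)‖_{L^{d+1,∞}} ≥ ε |E|^{d/(d+1)}, then there exists a ball ℬ = ℬ(z̄, e, r, r*) with |π*(ℬ)| ≤ |E| and |π*(ℬ) ∩ E| ≥ c ε^C |E|. -/

import Mathlib

open MeasureTheory ENNReal
open scoped RealInnerProductSpace

noncomputable section

/-- `ℝ^{d-1}` -/
abbrev Vec (n : ℕ) : Type := EuclideanSpace ℝ (Fin n)

/-- `ℝ^d = ℝ^{d-1} × ℝ`, a point `x = (x', x_d)` -/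
abbrev Pt (n : ℕ) : Type := Vec n × ℝ

/-- The Radon-like transform `Tf(x) = ∫_{ℝ^{d-1}} f(x' - t, x_d - |t|²) dt`. -/
def radonT (n : ℕ) (f : Pt n → ℝ≥0∞) (x : Pt n) : ℝ≥0∞ :=
  ∫⁻ t : Vec n, f (x.1 - t, x.2 - ‖t‖ ^ 2)

/-- The incidence functional `𝒯(E, E*) = ∫_E T(χ_{E*})`. -/
def incT (n : ℕ) (E Estar : Set (Pt n)) : ℝ≥0∞ :=
  ∫⁻ x in E, radonT n (Estar.indicator 1) x

/-- Admissibility of the parameters of a ball `ℬ(z̄, e, r, r*)`: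
the center `z̄ = (x̄, x̄*)` lies on the incidence manifold `ℐ`, `ρ > 0`,
`e` is an orthonormal basis of `ℝ^{d-1}`, and `r_j r*_j = ρ > 0` for all `j`. -/
def IsBallParams (n : ℕ) (zb : Pt n × Pt n) (e : Fin n → Vec n)
    (r rs : Fin n → ℝ) (ρ : ℝ) : Prop :=
  zb.2.2 = zb.1.2 - ‖zb.2.1 - zb.1.1‖ ^ 2 ∧ 0 < ρ ∧ Orthonormal ℝ e ∧
    (∀ j, 0 < r j) ∧ (∀ j, 0 < rs j) ∧ (∀ j, r j * rs j = ρ)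

/-- The ball `ℬ(z̄, e, r, r*)`, a subset of the incidence manifold
`ℐ = {(x,y) : y_d = x_d - |y' - x'|²} ⊆ ℝ^d × ℝ^d`. -/
def ballI (n : ℕ) (zb : Pt n × Pt n) (e : Fin n → Vec n)
    (r rs : Fin n → ℝ) (ρ : ℝ) : Set (Pt n × Pt n) :=
  fun z => z.2.2 = z.1.2 - ‖z.2.1 - z.1.1‖ ^ 2 ∧
    (∀ j, |⟪z.1.1 - zb.1.1, e j⟫| < r j) ∧
    |z.1.2 - zb.2.2 - ‖z.1.1 - zb.2.1‖ ^ 2| < ρ ∧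
    (∀ j, |⟪z.2.1 - zb.2.1, e j⟫| < rs j) ∧
    |z.2.2 - zb.1.2 + ‖z.2.1 - zb.1.1‖ ^ 2| < ρ

/-- The weak-type `L^{d+1,∞}` quasinorm `sup_{λ>0} λ |{g > λ}|^{1/(d+1)}`
of a nonnegative function `g`. -/
def weakN (n : ℕ) (q : ℝ) (g : Pt n → ℝ≥0∞) : ℝ≥0∞ :=
  ⨆ (lam : ℝ) (_ : 0 < lam),
    ENNReal.ofReal lam * volume {x : Pt n | ENNReal.ofReal lam < g x} ^ (1 / q)

open Matrix in
/-- homogeneous matrix with rows `(1, a i)` -/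
def hMat {n : ℕ} (a : Fin (n + 1) → Fin n → ℝ) : Matrix (Fin (n + 1)) (Fin (n + 1)) ℝ :=
  Matrix.of fun i => Fin.cons 1 (a i)

/-- simplex volume (up to a factorial) -/
def sD {n : ℕ} (a : Fin (n + 1) → Fin n → ℝ) : ℝ := |(hMat a).det|

/-- edge matrix -/
def wMat {n : ℕ} (a : Fin (n + 1) → Fin n → ℝ) : Matrix (Fin n) (Fin n) ℝ :=
  Matrix.of fun i j => a i.succ j - a 0 j

lemma sD_eq {n : ℕ} (a : Fin (n + 1) → Fin n → ℝ) : sD a = |(wMat a).det| := by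
  unfold sD
  congr 1
  rw [Matrix.det_eq_of_forall_row_eq_smul_add_const
    (B := Matrix.of (Fin.cons (Fin.cons 1 (a 0)) (fun i => Fin.cons 0 ((wMat a) i))))
    (Fin.cons 0 (fun _ => 1)) 0 (by simp)]
  · rw [Matrix.det_succ_column_zero, Fin.sum_univ_succ]
    simp
    congr 1
  · intro i j
    refine Fin.cases ?_ (fun i => ?_) i <;> refine Fin.cases ?_ (fun j => ?_) j <;>
      simp [hMat, wMat]

lemma sD_nonneg {n : ℕ} (a : Fin (n + 1) → Fin n → ℝ) : 0 ≤ sD a := abs_nonneg _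

lemma sD_perm {n : ℕ} (a : Fin (n + 1) → Fin n → ℝ) (σ : Equiv.Perm (Fin (n + 1))) :
    sD (a ∘ σ) = sD a := by
  have : hMat (a ∘ σ) = (hMat a).submatrix σ id := by
    ext i j; simp [hMat]
  rw [sD, this, Matrix.det_permute, abs_mul, sD]
  rcases Int.units_eq_one_or (Equiv.Perm.sign σ) with h | h <;> simp [h]

lemma hMat_update {n : ℕ} (a : Fin (n + 1) → Fin n → ℝ) (i) (x : Fin n → ℝ) :
    hMat (Function.update a i x) = (hMat a).updateRow i (Fin.cons 1 x) := by
  ext k j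
  by_cases h : k = i
  · subst h; simp [hMat]
  · simp [hMat, h, Matrix.updateRow_ne]

lemma continuous_sD {n : ℕ} : Continuous (sD (n := n)) := by
  unfold sD
  refine continuous_abs.comp (Continuous.matrix_det ?_)
  refine continuous_matrix fun i j => ?_
  refine Fin.cases ?_ (fun j => ?_) j <;> simp [hMat] <;> fun_prop

/-- barycentric coordinates bounded by one -/
lemma bary {n : ℕ} (a : Fin (n + 1) → Fin n → ℝ) (x : Fin n → ℝ) (h0 : sD a ≠ 0)
    (h : ∀ i, sD (Function.update a i x) ≤ sD a) :
    ∃ t : Fin n → ℝ, (∀ i, |t i| ≤ 1) ∧ x = a 0 + (wMat a).transpose.mulVec t := by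
  have hd : (hMat a).det ≠ 0 := by
    intro h'; apply h0; simp [sD, h']
  set c := (hMat a).transpose.cramer (Fin.cons 1 x) with hc
  have h1 := Matrix.mulVec_cramer (hMat a).transpose (Fin.cons 1 x)
  rw [← hc, Matrix.det_transpose] at h1
  have hci : ∀ i, |c i| ≤ |(hMat a).det| := by
    intro i
    rw [hc, Matrix.cramer_transpose_apply, ← hMat_update]
    exact h i
  have hz : ∑ i, c i = (hMat a).det := by
    have := congrFun h1 0
    simpa [Matrix.mulVec, dotProduct, hMat] using this
  have hj : ∀ j, ∑ i, a i j * c i = (hMat a).det * x j := by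
    intro j
    have := congrFun h1 j.succ
    simpa [Matrix.mulVec, dotProduct, hMat] using this
  refine ⟨fun i => c i.succ / (hMat a).det, fun i => ?_, ?_⟩
  · rw [abs_div]
    exact div_le_one_of_le₀ (hci _) (abs_nonneg _)
  · ext j
    have e1 := hj j
    rw [Fin.sum_univ_succ] at e1 hz
    have : x j = (∑ i, a i j * c i) / (hMat a).det := by
      rw [hj]; field_simp
    rw [this, Fin.sum_univ_succ]
    have c0 : c 0 = (hMat a).det - ∑ i : Fin n, c i.succ := by linarith
    simp only [Pi.add_apply, Matrix.mulVec, dotProduct, Matrix.transpose_apply, wMat, Matrix.of_apply]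
    rw [c0, div_eq_iff hd, add_mul, Finset.sum_mul]
    have : ∀ i : Fin n, (a i.succ j - a 0 j) * (c i.succ / (hMat a).det) * (hMat a).det
        = a i.succ j * c i.succ - a 0 j * c i.succ := by
      intro i; field_simp
    simp only [this, Finset.sum_sub_distrib, ← Finset.mul_sum]
    ring

lemma ae_sD_ne {n : ℕ} : ∀ᵐ a : Fin (n + 1) → Fin n → ℝ, sD a ≠ 0 := by
  have hm : MeasurableSet {a : Fin (n + 1) → Fin n → ℝ | sD a ≠ 0} :=
    (isOpen_ne_fun continuous_sD continuous_const).measurableSet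
  let v : Fin (n + 1) → Fin n → ℝ := Fin.cons 0 (fun i => Pi.single i 1)
  refine ae_mem_of_ae_add_linearMap_mem (LinearMap.toSpanSingleton ℝ _ v) volume volume
    (s := {a | sD a ≠ 0}) hm ?_
  intro y
  have key : ∀ t : ℝ, sD (y + (LinearMap.toSpanSingleton ℝ _ v) t)
      = |(wMat y).charpoly.eval (-t)| := by
    intro t
    rw [sD_eq, Matrix.eval_charpoly]
    have : wMat (y + (LinearMap.toSpanSingleton ℝ _ v) t) = -(Matrix.scalar (Fin n) (-t) - wMat y) := by
      ext i j
      simp only [wMat, v, Matrix.of_apply, Matrix.neg_apply, Matrix.sub_apply, Matrix.scalar_apply,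
        Matrix.diagonal_apply, Pi.add_apply, LinearMap.toSpanSingleton_apply, Pi.smul_apply,
        Fin.cons_succ, Fin.cons_zero, Pi.single_apply, smul_eq_mul, Pi.zero_apply]
      by_cases h : i = j
      · subst h; simp; ring
      · simp [h, Ne.symm h]
    rw [this, Matrix.det_neg, abs_mul]
    simp
  have hfin : {t : ℝ | ¬ (y + (LinearMap.toSpanSingleton ℝ _ v) t ∈ {a | sD a ≠ 0})}.Finite := by
    have : {t : ℝ | ¬ (y + (LinearMap.toSpanSingleton ℝ _ v) t ∈ {a | sD a ≠ 0})}
        = Neg.neg ⁻¹' {s | (wMat y).charpoly.IsRoot s} := by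
      ext t
      simp only [Set.mem_ofPred_eq, key, Set.mem_preimage, Polynomial.IsRoot.def, ne_eq, not_not, abs_eq_zero]
    rw [this]
    exact (Polynomial.finite_setOfPred_isRoot (Matrix.charpoly_monic _).ne_zero).preimage
      neg_injective.injOn
  exact hfin.measure_zero volume


lemma lintegral_pi_prod {α : Type*} [MeasureSpace α] [SigmaFinite (volume : Measure α)] :
    ∀ (N : ℕ) (f : Fin N → α → ℝ≥0∞) (_ : ∀ i, Measurable (f i)),
    ∫⁻ a : Fin N → α, ∏ i, f i (a i) = ∏ i, ∫⁻ x, f i x := by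
  intro N
  induction N with
  | zero => intro f _; simp [volume_pi]
  | succ N ih =>
    intro f hf
    have hp := (volume_preserving_piFinSuccAbove (fun _ : Fin (N + 1) => α) 0).symm
    rw [← hp.lintegral_comp_emb (MeasurableEquiv.measurableEmbedding _)]
    have : ∀ z : α × (Fin N → α),
        ∏ i, f i ((MeasurableEquiv.piFinSuccAbove (fun _ : Fin (N + 1) => α) 0).symm z i)
        = f 0 z.1 * ∏ i : Fin N, f i.succ (z.2 i) := by
      intro z
      rw [Fin.prod_univ_succ]
      simp [MeasurableEquiv.piFinSuccAbove]
    simp_rw [this]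
    rw [Measure.volume_eq_prod, lintegral_prod_mul (g := fun w : Fin N → α => ∏ i : Fin N, f i.succ (w i)) (hf 0).aemeasurable, Fin.prod_univ_succ]
    · rw [ih (fun i => f i.succ) (fun i => hf _)]
    · refine (Finset.measurable_prod _ fun i _ => (hf _).comp (measurable_pi_apply i)).aemeasurable

/-- change of variables inequality -/
lemma lintegral_matrix_le {N : ℕ} (M : Matrix (Fin N) (Fin N) ℝ) (f : (Fin N → ℝ) → ℝ≥0∞)
    (hf : Measurable f) :
    ENNReal.ofReal |M.det| * ∫⁻ y, f (M.mulVec y) ≤ ∫⁻ y, f y := by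
  by_cases h : M.det = 0
  · simp [h]
  · have h1 := Real.map_matrix_volume_pi_eq_smul_volume_pi h
    have hmeas : Measurable (Matrix.toLin' M) :=
      (LinearMap.continuous_of_finiteDimensional _).measurable
    have : ∫⁻ y, f (M.mulVec y) = ∫⁻ y, f y ∂(Measure.map (Matrix.toLin' M) volume) := by
      rw [lintegral_map hf hmeas]; simp
    rw [this, h1, lintegral_smul_measure, smul_eq_mul, ← mul_assoc,
      ← ENNReal.ofReal_mul (abs_nonneg _), ← abs_mul, mul_inv_cancel₀ h]
    simp

lemma lintegral_matrix_eq {N : ℕ} (M : Matrix (Fin N) (Fin N) ℝ) (h : M.det ≠ 0)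
    (f : (Fin N → ℝ) → ℝ≥0∞) (hf : Measurable f) :
    ENNReal.ofReal |M.det| * ∫⁻ y, f (M.mulVec y) = ∫⁻ y, f y := by
  have h1 := Real.map_matrix_volume_pi_eq_smul_volume_pi h
  have hmeas : Measurable (Matrix.toLin' M) :=
    (LinearMap.continuous_of_finiteDimensional _).measurable
  have : ∫⁻ y, f (M.mulVec y) = ∫⁻ y, f y ∂(Measure.map (Matrix.toLin' M) volume) := by
    rw [lintegral_map hf hmeas]; simp
  rw [this, h1, lintegral_smul_measure, smul_eq_mul, ← mul_assoc,
    ← ENNReal.ofReal_mul (abs_nonneg _), ← abs_mul, mul_inv_cancel₀ h]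
  simp

lemma meas_ind {α β : Type*} [MeasurableSpace α] [MeasurableSpace β] {G : Set β} (hG : MeasurableSet G)
    {φ : α → β} (hφ : Measurable φ) : Measurable fun x => G.indicator (1 : β → ℝ≥0∞) (φ x) :=
  (measurable_one.indicator hG).comp hφ

lemma lintegral_homog {n : ℕ} (f : (Fin (n + 1) → ℝ) → ℝ≥0∞) (hf : Measurable f) :
    ∫⁻ y : (Fin n → ℝ) × ℝ, f (Fin.cons y.2 (-y.1)) = ∫⁻ Y, f Y := by
  have hp := (volume_preserving_piFinSuccAbove (fun _ : Fin (n + 1) => ℝ) 0).symm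
  rw [← hp.lintegral_comp_emb (MeasurableEquiv.measurableEmbedding _)]
  have e1 : ∀ z : ℝ × (Fin n → ℝ),
      (MeasurableEquiv.piFinSuccAbove (fun _ : Fin (n + 1) => ℝ) 0).symm z = Fin.cons z.1 z.2 := by
    intro z; ext i; refine Fin.cases ?_ (fun i => ?_) i <;> simp [MeasurableEquiv.piFinSuccAbove]
  simp_rw [e1]
  have mc : Measurable fun z : ℝ × (Fin n → ℝ) => (Fin.cons z.1 z.2 : Fin (n + 1) → ℝ) := by
    simp_rw [← e1]; exact MeasurableEquiv.measurable _
  rw [Measure.volume_eq_prod, Measure.volume_eq_prod, lintegral_prod_symm', lintegral_prod]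
  · refine lintegral_congr fun s => ?_
    exact lintegral_neg_eq_self (μ := (volume : Measure (Fin n → ℝ))) (fun u => f (Fin.cons s u))
  · exact (hf.comp mc).aemeasurable
  · exact hf.comp (mc.comp (measurable_snd.prodMk measurable_fst.neg))

lemma stepA {n : ℕ} (G : Set ((Fin n → ℝ) × ℝ)) (hG : MeasurableSet G) :
    ∫⁻ y : (Fin n → ℝ) × ℝ, ∫⁻ a : Fin (n + 1) → Fin n → ℝ, ENNReal.ofReal (sD a) *
      ∏ i, G.indicator 1 (a i, y.2 - a i ⬝ᵥ y.1) ≤ volume G ^ (n + 1) := by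
  have mD : Measurable (sD (n := n)) := continuous_sD.measurable
  rw [lintegral_lintegral_swap]
  swap
  · refine Measurable.aemeasurable ?_
    refine (ENNReal.measurable_ofReal.comp (mD.comp measurable_snd)).mul ?_
    refine Finset.measurable_prod _ fun i _ => meas_ind hG ?_
    have : Continuous fun p : ((Fin n → ℝ) × ℝ) × (Fin (n + 1) → Fin n → ℝ) =>
      (p.2 i, p.1.2 - p.2 i ⬝ᵥ p.1.1) := by
      simp only [dotProduct]; fun_prop
    exact this.measurable
  have h1 : ∀ a : Fin (n + 1) → Fin n → ℝ,
      ∫⁻ y : (Fin n → ℝ) × ℝ, ENNReal.ofReal (sD a) *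
      ∏ i, G.indicator (1 : (Fin n → ℝ) × ℝ → ℝ≥0∞) (a i, y.2 - a i ⬝ᵥ y.1) ≤ ∏ i, ∫⁻ b, G.indicator 1 (a i, b) := by
    intro a
    have mf : Measurable fun b : Fin (n + 1) → ℝ => ∏ i, G.indicator (1 : (Fin n → ℝ) × ℝ → ℝ≥0∞) (a i, b i) :=
      Finset.measurable_prod _ fun i _ => meas_ind hG
        (measurable_const.prodMk (measurable_pi_apply i))
    have e : ∀ y : (Fin n → ℝ) × ℝ, ∀ i,
        y.2 - a i ⬝ᵥ y.1 = (hMat a).mulVec (Fin.cons y.2 (-y.1)) i := by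
      intro y i
      simp [Matrix.mulVec, dotProduct, Fin.sum_univ_succ, hMat, sub_eq_add_neg]
    simp_rw [e]
    have mM : Measurable fun Y : Fin (n + 1) → ℝ => (hMat a).mulVec Y := by
      have : Continuous fun Y : Fin (n + 1) → ℝ => (hMat a).mulVec Y := by fun_prop
      exact this.measurable
    rw [lintegral_const_mul']
    · rw [lintegral_homog (fun Y => ∏ i, G.indicator (1 : (Fin n → ℝ) × ℝ → ℝ≥0∞) (a i, (hMat a).mulVec Y i))
        (mf.comp mM)]
      refine (lintegral_matrix_le (hMat a) _ mf).trans ?_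
      rw [lintegral_pi_prod (n + 1) (fun i b => G.indicator (1 : (Fin n → ℝ) × ℝ → ℝ≥0∞) (a i, b))]
      exact fun i => meas_ind hG (measurable_const.prodMk measurable_id)
    · exact ENNReal.ofReal_ne_top
  refine (lintegral_mono h1).trans ?_
  have mg : Measurable fun a : Fin n → ℝ => ∫⁻ b, G.indicator (1 : (Fin n → ℝ) × ℝ → ℝ≥0∞) (a, b) :=
    (measurable_one.indicator hG).lintegral_prod_right'
  rw [lintegral_pi_prod (n + 1) (fun _ a => ∫⁻ b, G.indicator (1 : (Fin n → ℝ) × ℝ → ℝ≥0∞) (a, b)) (fun _ => mg)]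
  rw [Finset.prod_const, Finset.card_univ, Fintype.card_fin, ← lintegral_prod _
    (measurable_one.indicator hG).aemeasurable, lintegral_indicator_one hG, Measure.volume_eq_prod]

lemma lintegral_ind {α β : Type*} [MeasureSpace α] [MeasurableSpace β] {G : Set β}
    (hG : MeasurableSet G) {φ : α → β} (hφ : Measurable φ) :
    ∫⁻ x, G.indicator (1 : β → ℝ≥0∞) (φ x) = volume {x | φ x ∈ G} := by
  have h : MeasurableSet {x | φ x ∈ G} := hφ hG
  rw [← lintegral_indicator_one h]; rfl


lemma tonelliB {n : ℕ} (E G : Set ((Fin n → ℝ) × ℝ)) (hE : MeasurableSet E) (hG : MeasurableSet G)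
    (L : ℝ≥0∞) (hL : ∀ p ∈ G, L ≤ volume {u : Fin n → ℝ | (u, p.2 + p.1 ⬝ᵥ u) ∈ E}) :
    L * volume G ≤ ∫⁻ y in E, volume {a : Fin n → ℝ | (a, y.2 - a ⬝ᵥ y.1) ∈ G} := by
  have c1 : Measurable fun q : (Fin n → ℝ) × ((Fin n → ℝ) × ℝ) => (q.1, q.2.2 - q.1 ⬝ᵥ q.2.1) := by
    have : Continuous fun q : (Fin n → ℝ) × ((Fin n → ℝ) × ℝ) => (q.1, q.2.2 - q.1 ⬝ᵥ q.2.1) := by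
      simp only [dotProduct]; fun_prop
    exact this.measurable
  have c2 : Measurable fun q : ((Fin n → ℝ) × ℝ) × (Fin n → ℝ) => (q.2, q.1.2 + q.1.1 ⬝ᵥ q.2) := by
    have : Continuous fun q : ((Fin n → ℝ) × ℝ) × (Fin n → ℝ) => (q.2, q.1.2 + q.1.1 ⬝ᵥ q.2) := by
      simp only [dotProduct]; fun_prop
    exact this.measurable
  have h1 : ∫⁻ y in E, volume {a : Fin n → ℝ | (a, y.2 - a ⬝ᵥ y.1) ∈ G}
      = ∫⁻ y, ∫⁻ a : Fin n → ℝ, E.indicator (1 : (Fin n → ℝ) × ℝ → ℝ≥0∞) y *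
        G.indicator (1 : (Fin n → ℝ) × ℝ → ℝ≥0∞) (a, y.2 - a ⬝ᵥ y.1) := by
    rw [← lintegral_indicator hE]
    refine lintegral_congr fun y => ?_
    have my : Measurable fun a : Fin n → ℝ => (a, y.2 - a ⬝ᵥ y.1) :=
      c1.comp (measurable_id.prodMk measurable_const)
    rw [lintegral_const_mul _ (meas_ind hG my)]
    have : ∫⁻ a : Fin n → ℝ, G.indicator (1 : (Fin n → ℝ) × ℝ → ℝ≥0∞) (a, y.2 - a ⬝ᵥ y.1)
        = volume {a : Fin n → ℝ | (a, y.2 - a ⬝ᵥ y.1) ∈ G} := by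
      exact lintegral_ind hG my
    rw [this]
    by_cases hy : y ∈ E <;> simp [hy]
  rw [h1, lintegral_lintegral_swap]
  swap
  · exact ((meas_ind hE measurable_fst).mul (meas_ind hG (c1.comp measurable_swap))).aemeasurable
  have h2 : ∀ a : Fin n → ℝ, ∫⁻ b, L * G.indicator (1 : (Fin n → ℝ) × ℝ → ℝ≥0∞) (a, b) ≤
      ∫⁻ y, E.indicator (1 : (Fin n → ℝ) × ℝ → ℝ≥0∞) y *
        G.indicator (1 : (Fin n → ℝ) × ℝ → ℝ≥0∞) (a, y.2 - a ⬝ᵥ y.1) := by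
    intro a
    rw [Measure.volume_eq_prod, lintegral_prod]
    swap
    · exact ((meas_ind hE measurable_id).mul (meas_ind hG
        (c1.comp (measurable_const.prodMk measurable_id)))).aemeasurable
    have h3 : ∀ u : Fin n → ℝ, ∫⁻ s : ℝ, E.indicator (1 : (Fin n → ℝ) × ℝ → ℝ≥0∞) (u, s) *
        G.indicator (1 : (Fin n → ℝ) × ℝ → ℝ≥0∞) (a, s - a ⬝ᵥ u)
        = ∫⁻ b : ℝ, E.indicator (1 : (Fin n → ℝ) × ℝ → ℝ≥0∞) (u, b + a ⬝ᵥ u) *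
        G.indicator (1 : (Fin n → ℝ) × ℝ → ℝ≥0∞) (a, b) := by
      intro u
      rw [← lintegral_add_right_eq_self _ (a ⬝ᵥ u)]
      simp
    simp only [h3]
    rw [lintegral_lintegral_swap]
    swap
    · refine (Measurable.mul ?_ ?_).aemeasurable
      · exact meas_ind hE (c2.comp ((measurable_const.prodMk measurable_snd).prodMk measurable_fst))
      · exact meas_ind hG (measurable_const.prodMk measurable_snd)
    refine lintegral_mono fun b => ?_
    have mb : Measurable fun u : Fin n → ℝ => (u, b + a ⬝ᵥ u) :=
      c2.comp ((measurable_const (a := (a, b))).prodMk measurable_id)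
    rw [lintegral_mul_const _ (meas_ind hE mb)]
    have : ∫⁻ u : Fin n → ℝ, E.indicator (1 : (Fin n → ℝ) × ℝ → ℝ≥0∞) (u, b + a ⬝ᵥ u)
        = volume {u : Fin n → ℝ | (u, b + a ⬝ᵥ u) ∈ E} := by
      exact lintegral_ind hE mb
    rw [this]
    by_cases hb : (a, b) ∈ G
    · simpa [hb] using hL _ hb
    · simp [hb]
  refine le_trans (le_of_eq ?_) (lintegral_mono h2)
  rw [← lintegral_prod (fun p : (Fin n → ℝ) × ℝ => L * G.indicator 1 p)
    ((measurable_one.indicator hG).const_mul L).aemeasurable, lintegral_const_mul _ (measurable_one.indicator hG),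
    lintegral_indicator_one hG, Measure.volume_eq_prod]

lemma stepB {n : ℕ} (E G : Set ((Fin n → ℝ) × ℝ)) (hE : MeasurableSet E) (hG : MeasurableSet G)
    (hE0 : volume E ≠ 0) (hEt : volume E ≠ ⊤) (hG0 : volume G ≠ 0) (hGt : volume G ≠ ⊤)
    (L : ℝ≥0∞) (hL0 : L ≠ 0) (hLt : L ≠ ⊤)
    (hL : ∀ p ∈ G, L ≤ volume {u : Fin n → ℝ | (u, p.2 + p.1 ⬝ᵥ u) ∈ E}) :
    ∃ y ∈ E, L * volume G / (4 * volume E) + (L / (4 * volume G ^ n)) *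
      (∫⁻ a : Fin (n + 1) → Fin n → ℝ, ENNReal.ofReal (sD a) *
        ∏ i, G.indicator 1 (a i, y.2 - a i ⬝ᵥ y.1)) <
      volume {a : Fin n → ℝ | (a, y.2 - a ⬝ᵥ y.1) ∈ G} := by
  by_contra hcon
  push Not at hcon
  have h1 := tonelliB E G hE hG L hL
  have h2 : ∫⁻ y in E, volume {a : Fin n → ℝ | (a, y.2 - a ⬝ᵥ y.1) ∈ G} ≤
      ∫⁻ y in E, (L * volume G / (4 * volume E) + (L / (4 * volume G ^ n)) *
      (∫⁻ a : Fin (n + 1) → Fin n → ℝ, ENNReal.ofReal (sD a) *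
        ∏ i, G.indicator 1 (a i, y.2 - a i ⬝ᵥ y.1))) :=
    setLIntegral_mono' hE hcon
  rw [lintegral_add_left measurable_const, setLIntegral_const, lintegral_const_mul'] at h2
  swap
  · refine ENNReal.div_ne_top hLt ?_
    simp [hG0]
  have h3 : (L / (4 * volume G ^ n)) * ∫⁻ y in E, 
      (∫⁻ a : Fin (n + 1) → Fin n → ℝ, ENNReal.ofReal (sD a) *
        ∏ i, G.indicator 1 (a i, y.2 - a i ⬝ᵥ y.1)) ≤ (L / (4 * volume G ^ n)) * volume G ^ (n + 1) := by
    gcongr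
    exact (setLIntegral_le_lintegral _ _).trans (stepA G hG)
  have h4 := h1.trans (h2.trans (add_le_add_right h3 _))
  lift volume E to NNReal using hEt with e
  lift volume G to NNReal using hGt with g
  lift L to NNReal using hLt with l
  have he : (e : ℝ≥0∞) ≠ 0 := hE0
  norm_cast at hE0 hG0 hL0
  have hq : (4 * g ^ n) ≠ 0 := by positivity
  have hq2 : (4 * e) ≠ 0 := by positivity
  have : (l : ℝ≥0∞) * g ≤ ((l * g / (4 * e) * e + l / (4 * g ^ n) * g ^ (n + 1) : NNReal) : ℝ≥0∞) := by
    push_cast [ENNReal.coe_div hq, ENNReal.coe_div hq2]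
    exact h4
  norm_cast at this
  have e1 : l * g / (4 * e) * e + l / (4 * g ^ n) * g ^ (n + 1) = l * g / 2 := by
    field_simp
    ring
  rw [e1] at this
  have hpos : 0 < l * g := by positivity
  exact absurd this (not_le.mpr (NNReal.half_lt_self hpos.ne'))


/-- exchange the extra point with the `i`-th vertex -/
def tauM {R : Type*} {N : ℕ} (i : Fin (N + 1)) (q : R × (Fin (N + 1) → R)) : R × (Fin (N + 1) → R) :=
  (q.2 i, Function.update q.2 i q.1)

lemma tauM_mp {R : Type*} [MeasureSpace R] [SigmaFinite (volume : Measure R)] {N : ℕ} (i : Fin (N + 1)) :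
    MeasurePreserving (tauM (R := R) i) := by
  have h1 := volume_preserving_piFinSuccAbove (fun _ : Fin (N + 2) => R) 0
  have h2 := volume_measurePreserving_piCongrLeft (fun _ : Fin (N + 2) => R) (Equiv.swap 0 i.succ)
  have h3 := h1.comp (h2.comp h1.symm)
  convert h3 using 1
  funext q
  have e1 : ∀ z : R × (Fin (N + 1) → R),
      (MeasurableEquiv.piFinSuccAbove (fun _ : Fin (N + 2) => R) 0).symm z = Fin.cons z.1 z.2 := by
    intro z; ext i; refine Fin.cases ?_ (fun i => ?_) i <;> simp [MeasurableEquiv.piFinSuccAbove]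
  have e2 : ∀ (z : Fin (N + 2) → R) j, (MeasurableEquiv.piCongrLeft (fun _ : Fin (N + 2) => R) (Equiv.swap 0 i.succ)) z j
      = z (Equiv.swap 0 i.succ j) := by
    intro z j
    have := MeasurableEquiv.piCongrLeft_apply_apply (β := fun _ : Fin (N + 2) => R) (Equiv.swap 0 i.succ) z
      (Equiv.swap 0 i.succ j)
    simpa using this
  simp only [Function.comp_apply, e1]
  have e3 : ∀ z : Fin (N + 2) → R, (MeasurableEquiv.piFinSuccAbove (fun _ : Fin (N + 2) => R) 0) z
      = (z 0, fun j => z j.succ) := fun z => rfl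
  rw [e3]
  simp only [e2]
  refine Prod.ext ?_ ?_
  · simp [tauM]
  · funext j
    simp only [tauM]
    by_cases h : j = i
    · subst h; simp
    · have : Equiv.swap 0 i.succ j.succ = j.succ :=
        Equiv.swap_apply_of_ne_of_ne (Fin.succ_ne_zero _) (fun h' => h (Fin.succ_injective _ h'))
      rw [this]; simp [h]

lemma measSet_forall {α : Type*} [MeasurableSpace α] {ι : Type*} [Countable ι] {P : ι → α → Prop}
    (h : ∀ i, MeasurableSet {x | P i x}) : MeasurableSet {x | ∀ i, P i x} := by
  have : {x | ∀ i, P i x} = ⋂ i, {x | P i x} := by ext; simp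
  rw [this]
  exact MeasurableSet.iInter h

lemma sD_update_swap {n : ℕ} (a : Fin (n + 1) → Fin n → ℝ) (x : Fin n → ℝ) (i j : Fin (n + 1)) (h : j ≠ i) :
    sD (Function.update (Function.update a i x) j (a i)) = sD (Function.update a j x) := by
  rw [← sD_perm (Function.update a j x) (Equiv.swap i j)]
  congr 1
  funext k
  by_cases hk : k = i
  · subst hk; simp [h.symm]
  · by_cases hk' : k = j
    · subst hk'
      simp [h.symm]
    · simp [hk, hk', Equiv.swap_apply_of_ne_of_ne hk hk']

lemma measurable_update_sD {n : ℕ} (i : Fin (n + 1)) :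
    Measurable fun q : (Fin n → ℝ) × (Fin (n + 1) → Fin n → ℝ) => sD (Function.update q.2 i q.1) := by
  have : Continuous fun q : (Fin n → ℝ) × (Fin (n + 1) → Fin n → ℝ) => Function.update q.2 i q.1 :=
    continuous_snd.update i continuous_fst
  exact (continuous_sD.comp this).measurable

lemma stepC {n : ℕ} (A : Set (Fin n → ℝ)) (hA : MeasurableSet A) (h0 : volume A ≠ 0)
    (ht : volume A ≠ ⊤) (κ : ℝ≥0∞) (hκt : κ ≠ ⊤)
    (hκ : κ * ∫⁻ a : Fin (n + 1) → Fin n → ℝ, ENNReal.ofReal (sD a) * ∏ i, A.indicator 1 (a i) ≤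
      volume A ^ (n + 2) / (4 * (n + 2))) :
    ∃ a : Fin (n + 1) → Fin n → ℝ, sD a ≠ 0 ∧ volume A / (4 * (n + 2)) + κ * ENNReal.ofReal (sD a) <
      volume {x | x ∈ A ∧ ∀ i, sD (Function.update a i x) ≤ sD a} := by
  set B : Set ((Fin n → ℝ) × (Fin (n + 1) → Fin n → ℝ)) :=
    {q | q.1 ∈ A ∧ (∀ i, q.2 i ∈ A) ∧ ∀ i, sD (Function.update q.2 i q.1) ≤ sD q.2} with hB
  have mB : MeasurableSet B := by
    have m1 : MeasurableSet {q : (Fin n → ℝ) × (Fin (n + 1) → Fin n → ℝ) | q.1 ∈ A} := measurable_fst hA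
    have m2 : MeasurableSet {q : (Fin n → ℝ) × (Fin (n + 1) → Fin n → ℝ) | ∀ i, q.2 i ∈ A} := by
      refine measSet_forall fun i => ?_
      exact ((measurable_pi_apply i).comp measurable_snd) hA
    have m3 : MeasurableSet {q : (Fin n → ℝ) × (Fin (n + 1) → Fin n → ℝ) |
        ∀ i, sD (Function.update q.2 i q.1) ≤ sD q.2} := by
      refine measSet_forall fun i => ?_
      exact measurableSet_le (measurable_update_sD i) (continuous_sD.measurable.comp measurable_snd)
    exact m1.inter (m2.inter m3)
  have mprod : Measurable fun a : Fin (n + 1) → Fin n → ℝ => ∏ i, A.indicator (1 : (Fin n → ℝ) → ℝ≥0∞) (a i) :=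
    Finset.measurable_prod _ fun i _ => meas_ind hA (measurable_pi_apply i)
  have hcov : A ×ˢ (Set.univ.pi fun _ : Fin (n + 1) => A) ⊆ B ∪ ⋃ i, tauM i ⁻¹' B := by
    rintro ⟨x, a⟩ ⟨hx, ha⟩
    simp only [Set.mem_pi, Set.mem_univ, true_implies] at ha
    simp only at hx
    by_cases hmax : ∀ i, sD (Function.update a i x) ≤ sD a
    · exact Or.inl ⟨hx, ha, hmax⟩
    · push Not at hmax
      obtain ⟨i0, hi0⟩ := hmax
      obtain ⟨i, hi⟩ := Finite.exists_max fun i => sD (Function.update a i x)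
      refine Or.inr (Set.mem_iUnion.mpr ⟨i, ?_⟩)
      refine ⟨ha i, fun j => ?_, fun j => ?_⟩
      · by_cases h : j = i
        · subst h; simpa [tauM] using hx
        · simpa [tauM, h] using ha j
      · simp only [tauM]
        by_cases h : j = i
        · subst h
          simp only [Function.update_idem, Function.update_eq_self]
          exact hi0.le.trans (hi i0)
        · rw [sD_update_swap a x i j h]
          exact hi j
  have hvol : volume A ^ (n + 2) ≤ (n + 2) * volume B := by
    have h1 : volume (A ×ˢ (Set.univ.pi fun _ : Fin (n + 1) => A)) = volume A ^ (n + 2) := by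
      rw [Measure.volume_eq_prod, Measure.prod_prod, volume_pi_pi]
      simp [pow_succ']
    rw [← h1]
    refine (measure_mono hcov).trans ((measure_union_le _ _).trans ?_)
    have h2 : volume (⋃ i, tauM i ⁻¹' B) ≤ ∑ i : Fin (n + 1), volume B := by
      refine (measure_iUnion_fintype_le _ _).trans (Finset.sum_le_sum fun i _ => ?_)
      rw [(tauM_mp i).measure_preimage mB.nullMeasurableSet]
    refine (add_le_add_right h2 _).trans (le_of_eq ?_)
    simp
    ring
  have hBint : volume B = ∫⁻ a : Fin (n + 1) → Fin n → ℝ, (∏ i, A.indicator 1 (a i)) *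
      volume {x | x ∈ A ∧ ∀ i, sD (Function.update a i x) ≤ sD a} := by
    rw [Measure.volume_eq_prod, Measure.prod_apply_symm mB]
    refine lintegral_congr fun a => ?_
    by_cases h : ∀ i, a i ∈ A
    · have : ∏ i, A.indicator (1 : (Fin n → ℝ) → ℝ≥0∞) (a i) = 1 :=
        Finset.prod_eq_one fun i _ => by simp [h i]
      rw [this, one_mul]
      congr 1
      ext x
      simp [hB, h]
    · have h' := h
      push Not at h
      obtain ⟨i, hi⟩ := h
      have : ∏ i, A.indicator (1 : (Fin n → ℝ) → ℝ≥0∞) (a i) = 0 :=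
        Finset.prod_eq_zero (Finset.mem_univ i) (by simp [hi])
      rw [this, zero_mul]
      convert measure_empty (μ := volume)
      ext x
      simp [hB, h']
  by_contra hcon
  push Not at hcon
  have hle : volume B ≤ ∫⁻ a : Fin (n + 1) → Fin n → ℝ,
      (volume A / (4 * (n + 2)) * (∏ i, A.indicator 1 (a i)) +
        κ * (ENNReal.ofReal (sD a) * ∏ i, A.indicator 1 (a i))) := by
    rw [hBint]
    refine lintegral_mono_ae ?_
    filter_upwards [ae_sD_ne] with a ha
    calc _ ≤ (∏ i, A.indicator (1 : (Fin n → ℝ) → ℝ≥0∞) (a i)) *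
          (volume A / (4 * (n + 2)) + κ * ENNReal.ofReal (sD a)) := by
            gcongr; exact hcon a ha
      _ = _ := by ring
  rw [lintegral_add_left (mprod.const_mul _), lintegral_const_mul _ mprod, lintegral_const_mul' _ _ hκt,
    lintegral_pi_prod _ (fun _ => A.indicator (1 : (Fin n → ℝ) → ℝ≥0∞))
      (fun _ => measurable_one.indicator hA)] at hle
  simp only [lintegral_indicator_one hA, Finset.prod_const, Finset.card_univ, Fintype.card_fin] at hle
  have hle2 := hle.trans (add_le_add_right hκ _)
  have hle3 : volume A ^ (n + 2) ≤ (n + 2) * (volume A / (4 * (n + 2)) * volume A ^ (n + 1) +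
      volume A ^ (n + 2) / (4 * (n + 2))) := hvol.trans (by gcongr)
  lift volume A to NNReal using ht with m
  norm_cast at h0
  have hq : (4 * ((n : NNReal) + 2)) ≠ 0 := by positivity
  have : ((m ^ (n + 2) : NNReal) : ℝ≥0∞) ≤ (((n + 2) * (m / (4 * (n + 2)) * m ^ (n + 1) +
      m ^ (n + 2) / (4 * (n + 2))) : NNReal) : ℝ≥0∞) := by
    push_cast [ENNReal.coe_div hq]
    exact hle3
  have this' : m ^ (n + 2) ≤ ((n + 2) * (m / (4 * (n + 2)) * m ^ (n + 1) +
      m ^ (n + 2) / (4 * (n + 2))) : NNReal) := ENNReal.coe_le_coe.mp this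
  have e1 : ((n + 2) * (m / (4 * (n + 2)) * m ^ (n + 1) +
      m ^ (n + 2) / (4 * (n + 2))) : NNReal) = m ^ (n + 2) / 2 := by
    field_simp
    ring
  rw [e1] at this'
  have hpos : 0 < m ^ (n + 2) := by positivity
  exact absurd this' (not_le.mpr (NNReal.half_lt_self hpos.ne'))


lemma cube_bound {n : ℕ} (v : Fin n → ℝ) (i : Fin n) (c : ℝ) (φ : ℝ → ℝ≥0∞) (hφ : Measurable φ) :
    ENNReal.ofReal |v i| * ∫⁻ t : Fin n → ℝ, (∏ j, (Set.Icc (-1 : ℝ) 1).indicator 1 (t j)) * φ (c + t ⬝ᵥ v)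
      ≤ 2 ^ n * ∫⁻ s, φ s := by
  obtain ⟨N, rfl⟩ : ∃ N, n = N + 1 := ⟨n - 1, by have := i.2; omega⟩
  set I : ℝ → ℝ≥0∞ := (Set.Icc (-1 : ℝ) 1).indicator 1 with hI
  have mI : Measurable I := measurable_one.indicator measurableSet_Icc
  have hI1 : ∀ x, I x ≤ 1 := fun x => Set.indicator_le_self' (by simp) x
  have hp := (volume_preserving_piFinSuccAbove (fun _ : Fin (N + 1) => ℝ) i).symm
  rw [← hp.lintegral_comp_emb (MeasurableEquiv.measurableEmbedding _)]
  have e1 : ∀ z : ℝ × (Fin N → ℝ),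
      (MeasurableEquiv.piFinSuccAbove (fun _ : Fin (N + 1) => ℝ) i).symm z = Fin.insertNth i z.1 z.2 := by
    intro z; rfl
  have h1 : ∀ z : ℝ × (Fin N → ℝ),
      (∏ j, I ((MeasurableEquiv.piFinSuccAbove (fun _ : Fin (N + 1) => ℝ) i).symm z j)) *
        φ (c + (MeasurableEquiv.piFinSuccAbove (fun _ : Fin (N + 1) => ℝ) i).symm z ⬝ᵥ v) ≤
      (∏ j, I (z.2 j)) * φ ((c + z.2 ⬝ᵥ fun j => v (i.succAbove j)) + v i * z.1) := by
    intro z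
    rw [e1, Fin.prod_univ_succAbove _ i]
    have e2 : c + (Fin.insertNth i z.1 z.2 : Fin (N + 1) → ℝ) ⬝ᵥ v
        = (c + z.2 ⬝ᵥ fun j => v (i.succAbove j)) + v i * z.1 := by
      simp only [dotProduct]
      rw [Fin.sum_univ_succAbove _ i]
      simp; ring
    rw [e2]
    simp only [Fin.insertNth_apply_same, Fin.insertNth_apply_succAbove]
    gcongr
    calc _ ≤ 1 * ∏ j, I (z.2 j) := by gcongr; exact hI1 _
      _ = _ := one_mul _
  have h2 : ∀ c' : ℝ, ENNReal.ofReal |v i| * ∫⁻ τ : ℝ, φ (c' + v i * τ) ≤ ∫⁻ s, φ s := by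
    intro c'
    by_cases hv : v i = 0
    · simp [hv]
    · have mc : Measurable fun s => φ (c' + s) := hφ.comp (measurable_const_add c')
      have := Real.smul_map_volume_mul_left hv
      rw [← lintegral_map (f := fun s => φ (c' + s)) mc (measurable_const_mul (v i)), ← smul_eq_mul,
        ← lintegral_smul_measure, this]
      exact (lintegral_add_left_eq_self φ c').le
  have mcont : Measurable fun z : ℝ × (Fin N → ℝ) =>
      (c + z.2 ⬝ᵥ fun j => v (i.succAbove j)) + v i * z.1 := by
    have : Continuous fun z : ℝ × (Fin N → ℝ) =>
      (c + z.2 ⬝ᵥ fun j => v (i.succAbove j)) + v i * z.1 := by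
      simp only [dotProduct]; fun_prop
    exact this.measurable
  have mprod : Measurable fun a : Fin N → ℝ => ∏ j, I (a j) :=
    Finset.measurable_prod _ fun i _ => mI.comp (measurable_pi_apply i)
  calc _ ≤ ENNReal.ofReal |v i| * ∫⁻ z : ℝ × (Fin N → ℝ), (∏ j, I (z.2 j)) *
        φ ((c + z.2 ⬝ᵥ fun j => v (i.succAbove j)) + v i * z.1) := by
        exact mul_le_mul' le_rfl (lintegral_mono h1)
    _ = ENNReal.ofReal |v i| * ∫⁻ t : Fin N → ℝ, (∏ j, I (t j)) * ∫⁻ τ,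
        φ ((c + t ⬝ᵥ fun j => v (i.succAbove j)) + v i * τ) := by
        rw [Measure.volume_eq_prod, lintegral_prod_symm']
        · congr 1
          refine lintegral_congr fun t => ?_
          dsimp only
          rw [lintegral_const_mul]
          exact hφ.comp (mcont.comp (measurable_id.prodMk measurable_const))
        · exact (mprod.comp measurable_snd).mul (hφ.comp mcont)
    _ = ∫⁻ t : Fin N → ℝ, (∏ j, I (t j)) * (ENNReal.ofReal |v i| * ∫⁻ τ,
        φ ((c + t ⬝ᵥ fun j => v (i.succAbove j)) + v i * τ)) := by
        rw [← lintegral_const_mul' _ _ ENNReal.ofReal_ne_top]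
        refine lintegral_congr fun t => by ring
    _ ≤ ∫⁻ t : Fin N → ℝ, (∏ j, I (t j)) * ∫⁻ s, φ s := by
        gcongr with t; exact h2 _
    _ = 2 ^ N * ∫⁻ s, φ s := by
        rw [lintegral_mul_const _ mprod, lintegral_pi_prod N (fun _ => I) (fun _ => mI)]
        simp only [hI, lintegral_indicator_one measurableSet_Icc, Real.volume_Icc, Finset.prod_const,
          Finset.card_univ, Fintype.card_fin]
        norm_num
    _ ≤ _ := by
        gcongr
        · norm_num
        · omega

lemma S_bound {n : ℕ} (hn : 1 ≤ n) (W : Matrix (Fin n) (Fin n) ℝ) (hW : W.det ≠ 0) (a0 : Fin n → ℝ)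
    (S : Set (Fin n → ℝ)) (hSm : MeasurableSet S)
    (hS : ∀ a ∈ S, ∃ t : Fin n → ℝ, (∀ i, |t i| ≤ 1) ∧ a = a0 + W.transpose.mulVec t)
    (u : Fin n → ℝ) (φ : ℝ → ℝ≥0∞) (hφ : Measurable φ) :
    ENNReal.ofReal ‖W.mulVec u‖ * ∫⁻ a in S, φ (a ⬝ᵥ u) ≤ ENNReal.ofReal |W.det| * (2 ^ n * ∫⁻ s, φ s) := by
  have : Nonempty (Fin n) := ⟨⟨0, hn⟩⟩
  obtain ⟨i, hi⟩ := Finite.exists_max fun i => |W.mulVec u i|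
  have hnorm : ‖W.mulVec u‖ = |W.mulVec u i| := by
    refine le_antisymm ((pi_norm_le_iff_of_nonneg (abs_nonneg _)).mpr hi) (norm_le_pi_norm (W.mulVec u) i)
  have hT : W.transpose.det ≠ 0 := by rwa [Matrix.det_transpose]
  have mφ : Measurable fun a : Fin n → ℝ => φ (a ⬝ᵥ u) := by
    refine hφ.comp ?_
    have : Continuous fun a : Fin n → ℝ => a ⬝ᵥ u := by simp only [dotProduct]; fun_prop
    exact this.measurable
  have mg : Measurable fun a : Fin n → ℝ => S.indicator (fun a => φ (a ⬝ᵥ u)) a := mφ.indicator hSm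
  rw [hnorm, ← lintegral_indicator hSm, ← lintegral_add_left_eq_self _ a0,
    ← lintegral_matrix_eq W.transpose hT (fun a => S.indicator (fun a => φ (a ⬝ᵥ u)) (a0 + a))
      (mg.comp (measurable_const_add a0)), Matrix.det_transpose]
  rw [mul_left_comm]
  refine mul_le_mul' le_rfl ?_
  refine le_trans ?_ (cube_bound (W.mulVec u) i (a0 ⬝ᵥ u) φ hφ)
  refine mul_le_mul' le_rfl (lintegral_mono fun t => ?_)
  by_cases ht : a0 + W.transpose.mulVec t ∈ S
  · rw [Set.indicator_of_mem ht]
    obtain ⟨t', ht', h⟩ := hS _ ht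
    have : t = t' := Matrix.mulVec_injective_of_isUnit ((Matrix.isUnit_iff_isUnit_det _).mpr hT.isUnit)
      (add_left_cancel h)
    subst this
    have h1 : ∏ j, (Set.Icc (-1 : ℝ) 1).indicator (1 : ℝ → ℝ≥0∞) (t j) = 1 :=
      Finset.prod_eq_one fun j _ => by
        rw [Set.indicator_of_mem]; rfl
        exact abs_le.mp (ht' j)
    rw [h1, one_mul, add_dotProduct, Matrix.mulVec_transpose, ← Matrix.dotProduct_mulVec]
  · simp [ht]

lemma J_bound {n : ℕ} (hn : 1 ≤ n) (W : Matrix (Fin n) (Fin n) ℝ) (hW : W.det ≠ 0) (a0 : Fin n → ℝ)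
    (S : Set (Fin n → ℝ)) (hSm : MeasurableSet S)
    (hS : ∀ a ∈ S, ∃ t : Fin n → ℝ, (∀ i, |t i| ≤ 1) ∧ a = a0 + W.transpose.mulVec t)
    (E : Set ((Fin n → ℝ) × ℝ)) (hE : MeasurableSet E) (Ω : Set (Fin n → ℝ)) (hΩ : MeasurableSet Ω)
    (u0 : Fin n → ℝ) (s0 h : ℝ) (hh : ∀ u ∈ Ω, h ≤ ‖W.mulVec u‖) :
    ENNReal.ofReal h * ∫⁻ a in S, ∫⁻ u in Ω, E.indicator 1 (u0 + u, s0 + a ⬝ᵥ u) ≤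
      ENNReal.ofReal |W.det| * (2 ^ n * volume E) := by
  have mc : Measurable fun p : (Fin n → ℝ) × (Fin n → ℝ) => (u0 + p.2, s0 + p.1 ⬝ᵥ p.2) := by
    have : Continuous fun p : (Fin n → ℝ) × (Fin n → ℝ) => (u0 + p.2, s0 + p.1 ⬝ᵥ p.2) := by
      simp only [dotProduct]; fun_prop
    exact this.measurable
  have mpair : ∀ u : Fin n → ℝ, Measurable fun s : ℝ => (u0 + u, s0 + s) := fun u =>
    measurable_const.prodMk (measurable_const_add s0)
  rw [lintegral_lintegral_swap (meas_ind hE mc).aemeasurable, ← lintegral_const_mul' _ _ ENNReal.ofReal_ne_top]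
  calc _ ≤ ∫⁻ u in Ω, ENNReal.ofReal |W.det| * (2 ^ n * ∫⁻ s : ℝ, E.indicator 1 (u0 + u, s0 + s)) := by
        refine setLIntegral_mono' hΩ fun u hu => ?_
        refine le_trans ?_ (S_bound hn W hW a0 S hSm hS u (fun s => E.indicator 1 (u0 + u, s0 + s))
          (meas_ind hE (mpair u)))
        gcongr
        exact hh u hu
    _ ≤ ∫⁻ u, ENNReal.ofReal |W.det| * (2 ^ n * ∫⁻ s : ℝ, E.indicator 1 (u0 + u, s0 + s)) :=
        setLIntegral_le_lintegral _ _
    _ = _ := by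
        rw [lintegral_const_mul' _ _ ENNReal.ofReal_ne_top, lintegral_const_mul' _ _ (by finiteness)]
        congr 2
        have : ∀ u : Fin n → ℝ, ∫⁻ s : ℝ, E.indicator (1 : (Fin n → ℝ) × ℝ → ℝ≥0∞) (u0 + u, s0 + s)
            = ∫⁻ s : ℝ, E.indicator (1 : (Fin n → ℝ) × ℝ → ℝ≥0∞) (u0 + u, s) := by
          intro u
          exact lintegral_add_left_eq_self (fun s => E.indicator (1 : (Fin n → ℝ) × ℝ → ℝ≥0∞) (u0 + u, s)) s0
        simp_rw [this]
        rw [lintegral_add_left_eq_self (fun u => ∫⁻ s : ℝ, E.indicator (1 : (Fin n → ℝ) × ℝ → ℝ≥0∞) (u, s)) u0,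
          ← lintegral_prod _ (measurable_one.indicator hE).aemeasurable, lintegral_indicator_one hE,
          Measure.volume_eq_prod]


def boxD {n : ℕ} (W : Matrix (Fin n) (Fin n) ℝ) (a0 u0 : Fin n → ℝ) (s0 k : ℝ) : Set ((Fin n → ℝ) × ℝ) :=
  {y | ‖W.mulVec (y.1 - u0)‖ ≤ k ∧ |y.2 - s0 - a0 ⬝ᵥ (y.1 - u0)| ≤ n * k}

lemma measurableSet_boxD {n : ℕ} (W : Matrix (Fin n) (Fin n) ℝ) (a0 u0 : Fin n → ℝ) (s0 k : ℝ) :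
    MeasurableSet (boxD W a0 u0 s0 k) := by
  have c1 : Continuous fun y : (Fin n → ℝ) × ℝ => ‖W.mulVec (y.1 - u0)‖ := by fun_prop
  have c2 : Continuous fun y : (Fin n → ℝ) × ℝ => |y.2 - s0 - a0 ⬝ᵥ (y.1 - u0)| := by
    simp only [dotProduct]; fun_prop
  exact (isClosed_le c1 continuous_const).measurableSet.inter (isClosed_le c2 continuous_const).measurableSet

lemma volume_mulVec_le {n : ℕ} (W : Matrix (Fin n) (Fin n) ℝ) (hW : W.det ≠ 0) (δ : ℝ) (hδ : 0 ≤ δ) :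
    ENNReal.ofReal |W.det| * volume {u : Fin n → ℝ | ‖W.mulVec u‖ ≤ δ} = ENNReal.ofReal ((2 * δ) ^ n) := by
  have h := lintegral_matrix_eq W hW ((Metric.closedBall (0 : Fin n → ℝ) δ).indicator 1)
    (measurable_one.indicator Metric.isClosed_closedBall.measurableSet)
  rw [lintegral_indicator_one Metric.isClosed_closedBall.measurableSet,
    Real.volume_pi_closedBall 0 hδ,
    lintegral_ind Metric.isClosed_closedBall.measurableSet] at h
  · simpa using h
  · have : Continuous fun y : Fin n → ℝ => W.mulVec y := by fun_prop
    exact this.measurable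

lemma abs_dot_le {n : ℕ} (t v : Fin n → ℝ) (ht : ∀ i, |t i| ≤ 1) : |t ⬝ᵥ v| ≤ n * ‖v‖ := by
  calc |t ⬝ᵥ v| ≤ ∑ i, |t i * v i| := Finset.abs_sum_le_sum_abs _ _
    _ ≤ ∑ i : Fin n, ‖v‖ := by
        refine Finset.sum_le_sum fun i _ => ?_
        rw [abs_mul]
        calc _ ≤ 1 * ‖v‖ := mul_le_mul (ht i) (norm_le_pi_norm v i) (abs_nonneg _) zero_le_one
          _ = _ := one_mul _
    _ = _ := by simp

lemma stepD {n : ℕ} (hn : 1 ≤ n) (W : Matrix (Fin n) (Fin n) ℝ) (hW : W.det ≠ 0) (a0 : Fin n → ℝ)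
    (S : Set (Fin n → ℝ)) (hSm : MeasurableSet S)
    (hS : ∀ a ∈ S, ∃ t : Fin n → ℝ, (∀ i, |t i| ≤ 1) ∧ a = a0 + W.transpose.mulVec t)
    (E : Set ((Fin n → ℝ) × ℝ)) (hE : MeasurableSet E)
    (u0 : Fin n → ℝ) (s0 lam k δ g e : ℝ) (hlam : 0 < lam) (hk : 0 < k) (hδ : 0 < δ) (hg : 0 < g)
    (hgS : volume S = ENNReal.ofReal g) (heE : volume E = ENNReal.ofReal e)
    (hl : ∀ a ∈ S, ENNReal.ofReal lam ≤ volume {u | (u0 + u, s0 + a ⬝ᵥ u) ∈ E})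
    (h1 : 2 ^ n * |W.det| * e ≤ k * (g * lam / 4)) (h2 : (2 * δ) ^ n ≤ |W.det| * (lam / 4)) :
    ENNReal.ofReal (δ * (g * lam / 2)) ≤
      ENNReal.ofReal |W.det| * (2 ^ n * volume (E ∩ boxD W a0 u0 s0 k)) := by
  have cW : Continuous fun u : Fin n → ℝ => ‖W.mulVec u‖ := by fun_prop
  have hD : 0 < |W.det| := abs_pos.mpr hW
  set F : (Fin n → ℝ) → (Fin n → ℝ) → ℝ≥0∞ := fun a u => E.indicator 1 (u0 + u, s0 + a ⬝ᵥ u) with hF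
  set Ω1 : Set (Fin n → ℝ) := {u | ‖W.mulVec u‖ ≤ δ} with hΩ1
  set Ω2 : Set (Fin n → ℝ) := {u | δ ≤ ‖W.mulVec u‖ ∧ ‖W.mulVec u‖ ≤ k} with hΩ2
  set Ω3 : Set (Fin n → ℝ) := {u | k ≤ ‖W.mulVec u‖} with hΩ3
  have m2 : MeasurableSet Ω2 :=
    (isClosed_le continuous_const cW).measurableSet.inter (isClosed_le cW continuous_const).measurableSet
  have m3 : MeasurableSet Ω3 := (isClosed_le continuous_const cW).measurableSet
  have mc : Measurable fun p : (Fin n → ℝ) × (Fin n → ℝ) => (u0 + p.2, s0 + p.1 ⬝ᵥ p.2) := by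
    have : Continuous fun p : (Fin n → ℝ) × (Fin n → ℝ) => (u0 + p.2, s0 + p.1 ⬝ᵥ p.2) := by
      simp only [dotProduct]; fun_prop
    exact this.measurable
  have mF : Measurable (Function.uncurry F) := meas_ind hE mc
  have mca : ∀ a : Fin n → ℝ, Measurable fun u : Fin n → ℝ => (u0 + u, s0 + a ⬝ᵥ u) := fun a =>
    mc.comp (measurable_const.prodMk measurable_id)
  have hsplit : ∀ a, ∫⁻ u, F a u ≤ (∫⁻ u in Ω1, F a u) + (∫⁻ u in Ω2, F a u) + ∫⁻ u in Ω3, F a u := by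
    intro a
    have hU : (Set.univ : Set (Fin n → ℝ)) ⊆ (Ω1 ∪ Ω2) ∪ Ω3 := by
      intro u _
      rcases le_total ‖W.mulVec u‖ δ with h | h
      · exact Or.inl (Or.inl h)
      · rcases le_total ‖W.mulVec u‖ k with h' | h'
        · exact Or.inl (Or.inr ⟨h, h'⟩)
        · exact Or.inr h'
    rw [← setLIntegral_univ]
    refine (lintegral_mono_set hU).trans ((lintegral_union_le _ _ _).trans ?_)
    gcongr
    exact lintegral_union_le _ _ _
  have mJ : ∀ Ω : Set (Fin n → ℝ), Measurable fun a => ∫⁻ u in Ω, F a u := fun Ω =>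
    mF.lintegral_prod_right'
  have J1 : ∫⁻ a in S, ∫⁻ u in Ω1, F a u ≤ ENNReal.ofReal (g * lam / 4) := by
    have v1 : volume Ω1 ≤ ENNReal.ofReal (lam / 4) := by
      have := volume_mulVec_le W hW δ hδ.le
      have h3 : ENNReal.ofReal |W.det| * volume Ω1 ≤ ENNReal.ofReal |W.det| * ENNReal.ofReal (lam / 4) := by
        rw [this, ← ENNReal.ofReal_mul hD.le]
        exact ENNReal.ofReal_le_ofReal h2
      rwa [ENNReal.mul_le_mul_iff_right (by simpa using hD.ne') ENNReal.ofReal_ne_top] at h3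
    calc _ ≤ ∫⁻ a in S, ENNReal.ofReal (lam / 4) := by
          refine lintegral_mono fun a => ?_
          calc ∫⁻ u in Ω1, F a u ≤ ∫⁻ u in Ω1, 1 := by
                refine lintegral_mono fun u => ?_
                simp only [hF]
                exact Set.indicator_le_self' (by simp) _
            _ = volume Ω1 := by simp
            _ ≤ _ := v1
      _ = _ := by
          rw [setLIntegral_const, hgS, ← ENNReal.ofReal_mul (by positivity)]
          congr 1; ring
  have J3 : ∫⁻ a in S, ∫⁻ u in Ω3, F a u ≤ ENNReal.ofReal (g * lam / 4) := by
    have h3 := J_bound hn W hW a0 S hSm hS E hE Ω3 m3 u0 s0 k (fun u hu => hu)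
    have h4 : ENNReal.ofReal |W.det| * (2 ^ n * volume E) ≤ ENNReal.ofReal k * ENNReal.ofReal (g * lam / 4) := by
      rw [heE, ← ENNReal.ofReal_mul hk.le]
      have : (2 : ℝ≥0∞) ^ n = ENNReal.ofReal (2 ^ n) := by
        rw [ENNReal.ofReal_pow (by norm_num)]; norm_num
      rw [this, ← ENNReal.ofReal_mul (by positivity), ← ENNReal.ofReal_mul (by positivity)]
      refine ENNReal.ofReal_le_ofReal (le_trans (le_of_eq ?_) h1)
      ring
    have h5 := h3.trans h4
    rwa [ENNReal.mul_le_mul_iff_right (by simpa using hk) ENNReal.ofReal_ne_top] at h5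
  set J := ∫⁻ a in S, ∫⁻ u in Ω2, F a u with hJ
  have J2 : ENNReal.ofReal (g * lam / 2) ≤ J := by
    have h3 : ENNReal.ofReal (g * lam / 2) + ENNReal.ofReal (g * lam / 2) ≤ J + ENNReal.ofReal (g * lam / 2) := by
      calc _ = ∫⁻ a in S, ENNReal.ofReal lam := by
            rw [setLIntegral_const, hgS, ← ENNReal.ofReal_mul (by positivity),
              ← ENNReal.ofReal_add (by positivity) (by positivity)]
            congr 1; ring
        _ ≤ ∫⁻ a in S, ((∫⁻ u in Ω1, F a u) + (∫⁻ u in Ω2, F a u) + ∫⁻ u in Ω3, F a u) := by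
            refine setLIntegral_mono' hSm fun a ha => ?_
            refine (hl a ha).trans (le_trans (le_of_eq ?_) (hsplit a))
            exact (lintegral_ind hE (mca a)).symm
        _ = (∫⁻ a in S, ∫⁻ u in Ω1, F a u) + J + ∫⁻ a in S, ∫⁻ u in Ω3, F a u := by
            rw [lintegral_add_right _ (mJ _), lintegral_add_right _ (mJ _)]
        _ ≤ ENNReal.ofReal (g * lam / 4) + J + ENNReal.ofReal (g * lam / 4) := by gcongr
        _ = J + ENNReal.ofReal (g * lam / 2) := by
            rw [add_comm _ J, add_assoc, ← ENNReal.ofReal_add (by positivity) (by positivity)]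
            congr 2; ring
    exact (ENNReal.add_le_add_iff_right ENNReal.ofReal_ne_top).mp h3
  have J2' : ENNReal.ofReal δ * J ≤ ENNReal.ofReal |W.det| * (2 ^ n * volume (E ∩ boxD W a0 u0 s0 k)) := by
    refine le_trans (mul_le_mul' le_rfl ?_) (J_bound hn W hW a0 S hSm hS _
      (hE.inter (measurableSet_boxD W a0 u0 s0 k)) Ω2 m2 u0 s0 δ (fun u hu => hu.1))
    refine setLIntegral_mono' hSm fun a ha => setLIntegral_mono' m2 fun u hu => ?_
    by_cases h : (u0 + u, s0 + a ⬝ᵥ u) ∈ E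
    · have hb : (u0 + u, s0 + a ⬝ᵥ u) ∈ boxD W a0 u0 s0 k := by
        obtain ⟨t, ht, rfl⟩ := hS a ha
        refine ⟨by simpa using hu.2, ?_⟩
        have e1 : s0 + (a0 + W.transpose.mulVec t) ⬝ᵥ u - s0 - a0 ⬝ᵥ (u0 + u - u0) = t ⬝ᵥ W.mulVec u := by
          rw [add_sub_cancel_left, add_sub_cancel_left, add_dotProduct, Matrix.mulVec_transpose, ← Matrix.dotProduct_mulVec]
          ring
        dsimp only
        rw [e1]
        exact (abs_dot_le t _ ht).trans (by gcongr; exact hu.2)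
      have hm : (u0 + u, s0 + a ⬝ᵥ u) ∈ E ∩ boxD W a0 u0 s0 k := ⟨h, hb⟩
      simp only [hF]
      rw [Set.indicator_of_mem hm, Set.indicator_of_mem h]
    · simp [hF, h]
  refine le_trans ?_ J2'
  rw [ENNReal.ofReal_mul hδ.le]
  gcongr


lemma S_vol_le {n : ℕ} (W : Matrix (Fin n) (Fin n) ℝ) (a0 : Fin n → ℝ)
    (S : Set (Fin n → ℝ))
    (hS : ∀ a ∈ S, ∃ t : Fin n → ℝ, (∀ i, |t i| ≤ 1) ∧ a = a0 + W.transpose.mulVec t) :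
    volume S ≤ ENNReal.ofReal (2 ^ n * |W.det|) := by
  rw [← measure_preimage_add volume a0 S]
  have hsub : (fun h => a0 + h) ⁻¹' S ⊆ (Matrix.toLin' W.transpose) '' (Metric.closedBall 0 1) := by
    intro h hh
    obtain ⟨t, ht, e⟩ := hS _ hh
    refine ⟨t, ?_, ?_⟩
    · rw [mem_closedBall_zero_iff]
      exact (pi_norm_le_iff_of_nonneg zero_le_one).mpr ht
    · rw [Matrix.toLin'_apply]; exact (add_left_cancel e).symm
  refine (measure_mono hsub).trans ?_
  rw [Measure.addHaar_image_linearMap, LinearMap.det_toLin', Matrix.det_transpose,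
    Real.volume_pi_closedBall _ zero_le_one, ← ENNReal.ofReal_mul (abs_nonneg _)]
  refine ENNReal.ofReal_le_ofReal (le_of_eq ?_)
  simp [mul_comm]

lemma stepBC {n : ℕ} (E G : Set ((Fin n → ℝ) × ℝ)) (hE : MeasurableSet E) (hG : MeasurableSet G)
    (e f lam N : ℝ) (he : 0 < e) (hf : 0 < f) (hlam : 0 < lam)
    (hEe : volume E = ENNReal.ofReal e) (hGf : volume G = ENNReal.ofReal f)
    (hGN : G ⊆ Metric.closedBall 0 N)
    (hL : ∀ p ∈ G, ENNReal.ofReal lam ≤ volume {u : Fin n → ℝ | (u, p.2 + p.1 ⬝ᵥ u) ∈ E}) :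
    ∃ (u0 : Fin n → ℝ) (s0 : ℝ) (W : Matrix (Fin n) (Fin n) ℝ) (a0 : Fin n → ℝ) (S : Set (Fin n → ℝ))
      (g m : ℝ), W.det ≠ 0 ∧ MeasurableSet S ∧
      (∀ a ∈ S, ∃ t : Fin n → ℝ, (∀ i, |t i| ≤ 1) ∧ a = a0 + W.transpose.mulVec t) ∧
      (∀ a ∈ S, (a, s0 - a ⬝ᵥ u0) ∈ G) ∧ volume S = ENNReal.ofReal g ∧ 0 < g ∧
      lam * f / (4 * e) ≤ m ∧
      m / (4 * (n + 2)) + m ^ (n + 1) * lam / (16 * (n + 2) * f ^ n) * |W.det| ≤ g := by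
  obtain ⟨y, hy, hB⟩ := stepB E G hE hG (by rw [hEe]; simpa using he) (by rw [hEe]; simp)
    (by rw [hGf]; simpa using hf) (by rw [hGf]; simp) (ENNReal.ofReal lam) (by simpa using hlam)
    (by simp) hL
  set A : Set (Fin n → ℝ) := {a | (a, y.2 - a ⬝ᵥ y.1) ∈ G} with hA
  have mc : Measurable fun a : Fin n → ℝ => (a, y.2 - a ⬝ᵥ y.1) := by
    have : Continuous fun a : Fin n → ℝ => (a, y.2 - a ⬝ᵥ y.1) := by
      simp only [dotProduct]; fun_prop
    exact this.measurable
  have mA : MeasurableSet A := mc hG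
  have hAsub : A ⊆ Metric.closedBall 0 N := by
    intro a ha
    have := hGN ha
    rw [mem_closedBall_zero_iff] at this ⊢
    exact (norm_fst_le _).trans this
  have hAt : volume A ≠ ⊤ :=
    ((measure_mono hAsub).trans_lt measure_closedBall_lt_top).ne
  set m := (volume A).toReal with hm
  have hAm : volume A = ENNReal.ofReal m := (ENNReal.ofReal_toReal hAt).symm
  set I := ∫⁻ a : Fin (n + 1) → Fin n → ℝ, ENNReal.ofReal (sD a) * ∏ i, A.indicator 1 (a i) with hI
  have hI' : (∫⁻ a : Fin (n + 1) → Fin n → ℝ, ENNReal.ofReal (sD a) *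
        ∏ i, G.indicator 1 (a i, y.2 - a i ⬝ᵥ y.1)) = I := rfl
  rw [hI', hEe, hGf, hAm] at hB
  have h4 : (4 : ℝ≥0∞) = ENNReal.ofReal 4 := by norm_num
  have c1 : ENNReal.ofReal lam * ENNReal.ofReal f / (4 * ENNReal.ofReal e) = ENNReal.ofReal (lam * f / (4 * e)) := by
    rw [h4, ← ENNReal.ofReal_mul hlam.le, ← ENNReal.ofReal_mul (by norm_num),
      ENNReal.ofReal_div_of_pos (by positivity)]
  have c2 : ENNReal.ofReal lam / (4 * ENNReal.ofReal f ^ n) = ENNReal.ofReal (lam / (4 * f ^ n)) := by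
    rw [h4, ← ENNReal.ofReal_pow hf.le, ← ENNReal.ofReal_mul (by norm_num),
      ENNReal.ofReal_div_of_pos (by positivity)]
  rw [c1, c2] at hB
  have hm1 : lam * f / (4 * e) < m := by
    have := lt_of_le_of_lt le_self_add hB
    exact (ENNReal.ofReal_lt_ofReal_iff_of_nonneg (by positivity)).mp this
  have hm0 : 0 < m := lt_of_le_of_lt (by positivity) hm1
  have hm2 : ENNReal.ofReal (lam / (4 * f ^ n)) * I ≤ ENNReal.ofReal m :=
    (lt_of_le_of_lt le_add_self hB).le
  set θ := m ^ (n + 1) * lam / (16 * (n + 2) * f ^ n) with hθ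
  have hθ0 : 0 ≤ θ := by positivity
  have cn : (4 * (n + 2) : ℝ≥0∞) = ENNReal.ofReal (4 * (n + 2)) := by
    rw [ENNReal.ofReal_mul (by norm_num), ENNReal.ofReal_add (by positivity) (by norm_num)]
    simp
  obtain ⟨a, ha0, hC⟩ := stepC A mA (by rw [hAm]; simpa using hm0) hAt (ENNReal.ofReal θ) (by simp) (by
    rw [← hI, hAm, ← ENNReal.ofReal_pow hm0.le, cn, ← ENNReal.ofReal_div_of_pos (by positivity)]
    have : ENNReal.ofReal θ = ENNReal.ofReal (m ^ (n + 1) / (4 * (n + 2))) * ENNReal.ofReal (lam / (4 * f ^ n)) := by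
      rw [← ENNReal.ofReal_mul (by positivity)]
      congr 1
      rw [hθ]; field_simp; norm_num
    rw [this, mul_assoc]
    refine (mul_le_mul' le_rfl hm2).trans ?_
    rw [← ENNReal.ofReal_mul (by positivity)]
    refine ENNReal.ofReal_le_ofReal (le_of_eq ?_)
    rw [pow_succ m (n + 1)]; ring)
  set S : Set (Fin n → ℝ) := {x | x ∈ A ∧ ∀ i, sD (Function.update a i x) ≤ sD a} with hS
  have mS : MeasurableSet S := by
    refine mA.inter (measSet_forall fun i => ?_)
    have := (measurable_update_sD (n := n) i).comp (measurable_id.prodMk (measurable_const (a := a)))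
    exact measurableSet_le this measurable_const
  have hSt : volume S ≠ ⊤ :=
    ((measure_mono (show S ⊆ A from fun x hx => hx.1)).trans_lt hAt.lt_top).ne
  have hSg : volume S = ENNReal.ofReal (volume S).toReal := (ENNReal.ofReal_toReal hSt).symm
  rw [hSg, hAm, cn, ← ENNReal.ofReal_div_of_pos (by positivity), ← ENNReal.ofReal_mul hθ0,
    ← ENNReal.ofReal_add (by positivity) (mul_nonneg hθ0 (sD_nonneg a)),
    ENNReal.ofReal_lt_ofReal_iff_of_nonneg (by have := sD_nonneg a; positivity)] at hC
  refine ⟨y.1, y.2, wMat a, a 0, S, (volume S).toReal, m, ?_, mS, fun x hx => bary a x ha0 hx.2,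
    fun x hx => hx.1, hSg, ?_, hm1.le, ?_⟩
  · intro h; apply ha0; rw [sD_eq, h]; simp
  · exact lt_of_le_of_lt (by have := sD_nonneg a; positivity) hC
  · rw [← sD_eq]; exact hC.le

lemma numer (n : ℕ) (hn : 1 ≤ n) (e f lam m g D Y : ℝ) (he : 0 < e) (hf : 0 < f) (hlam : 0 < lam)
    (hD : 0 < D) (h1 : lam * f / (4 * e) ≤ m)
    (h2 : m / (4 * (n + 2)) + m ^ (n + 1) * lam / (16 * (n + 2) * f ^ n) * D ≤ g)
    (h3 : g ≤ 2 ^ n * D)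
    (hY : Y = lam ^ (n + 2) * f / (e ^ (n + 1) * (2 ^ n * (16 * (n + 2)) * 4 ^ (n + 1)))) :
    0 < Y ∧ Y ≤ 1 ∧ 2 ^ n * Y * D ≤ g ∧ 4 ^ (n + 1) * Y * (e / lam) ^ n ≤ D * lam := by
  have hY0 : 0 < Y := by rw [hY]; positivity
  have hm0 : 0 < m := lt_of_lt_of_le (by positivity) h1
  have hθ : 2 ^ n * Y ≤ m ^ (n + 1) * lam / (16 * (n + 2) * f ^ n) := by
    calc 2 ^ n * Y = (lam * f / (4 * e)) ^ (n + 1) * lam / (16 * (n + 2) * f ^ n) := by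
          rw [hY, div_pow, mul_pow, mul_pow, pow_succ f n, pow_succ lam (n + 1)]
          field_simp
      _ ≤ _ := by gcongr
  have h4 : 2 ^ n * Y * D ≤ g := by
    have : 2 ^ n * Y * D ≤ m ^ (n + 1) * lam / (16 * (n + 2) * f ^ n) * D := by gcongr
    have : 0 < m / (4 * ((n : ℝ) + 2)) := by positivity
    linarith
  refine ⟨hY0, ?_, h4, ?_⟩
  · have : 2 ^ n * D * Y ≤ 2 ^ n * D * 1 := by nlinarith
    exact le_of_mul_le_mul_left this (by positivity)
  · have h5 : lam * f / (4 * e) / (4 * (n + 2)) ≤ g := by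
      have : 0 ≤ m ^ (n + 1) * lam / (16 * (n + 2) * f ^ n) * D := by positivity
      have : lam * f / (4 * e) / (4 * (n + 2)) ≤ m / (4 * (n + 2)) := by gcongr
      linarith
    have h6 : 2 ^ n * (4 ^ (n + 1) * Y * (e / lam) ^ n) = lam * f / (4 * e) / (4 * (n + 2)) * lam := by
      rw [hY, div_pow, pow_add lam n 2, pow_succ e n]
      field_simp
      norm_num
    have h7 : 2 ^ n * (4 ^ (n + 1) * Y * (e / lam) ^ n) ≤ 2 ^ n * (D * lam) := by
      rw [h6, ← mul_assoc]
      gcongr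
      linarith
    exact le_of_mul_le_mul_left h7 (by positivity)

lemma core {n : ℕ} (hn : 1 ≤ n) (E G : Set ((Fin n → ℝ) × ℝ)) (hE : MeasurableSet E) (hG : MeasurableSet G)
    (e f lam N Y : ℝ) (he : 0 < e) (hf : 0 < f) (hlam : 0 < lam)
    (hEe : volume E = ENNReal.ofReal e) (hGf : volume G = ENNReal.ofReal f)
    (hGN : G ⊆ Metric.closedBall 0 N)
    (hL : ∀ p ∈ G, ENNReal.ofReal lam ≤ volume {u : Fin n → ℝ | (u, p.2 + p.1 ⬝ᵥ u) ∈ E})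
    (hY : Y = lam ^ (n + 2) * f / (e ^ (n + 1) * (2 ^ n * (16 * (n + 2)) * 4 ^ (n + 1)))) :
    ∃ (u0 : Fin n → ℝ) (s0 : ℝ) (W : Matrix (Fin n) (Fin n) ℝ) (a0 : Fin n → ℝ) (k : ℝ), W.det ≠ 0 ∧
      0 < Y ∧ Y ≤ 1 ∧ 0 < k ∧ k ^ (n + 1) * Y ^ (n + 2) ≤ e * |W.det| ∧
      ENNReal.ofReal (Y ^ 2 * e) ≤ volume (E ∩ boxD W a0 u0 s0 k) := by
  obtain ⟨u0, s0, W, a0, S, g, m, hW, mS, hS, hSG, hSg, hg, h1, h2⟩ :=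
    stepBC E G hE hG e f lam N he hf hlam hEe hGf hGN hL
  have hD : 0 < |W.det| := abs_pos.mpr hW
  have h3 : g ≤ 2 ^ n * |W.det| := by
    have := S_vol_le W a0 S hS
    rw [hSg] at this
    exact (ENNReal.ofReal_le_ofReal_iff (by positivity)).mp this
  obtain ⟨hY0, hY1, h4, h5⟩ := numer n hn e f lam m g |W.det| Y he hf hlam hD h1 h2 h3 hY
  set D := |W.det| with hDdef
  have hk : 0 < 4 * e / (lam * Y) := by positivity
  have hδ : 0 < 2 * Y * e / lam := by positivity
  refine ⟨u0, s0, W, a0, 4 * e / (lam * Y), hW, hY0, hY1, hk, ?_, ?_⟩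
  · calc (4 * e / (lam * Y)) ^ (n + 1) * Y ^ (n + 2) = (e / lam) * (4 ^ (n + 1) * Y * (e / lam) ^ n) := by
          rw [div_pow, mul_pow, mul_pow, pow_succ Y (n + 1), div_pow, pow_succ e n, pow_succ lam n]
          field_simp
      _ ≤ (e / lam) * (D * lam) := by gcongr
      _ = e * D := by field_simp
  · have hst := stepD hn W hW a0 S mS hS E hE u0 s0 lam (4 * e / (lam * Y)) (2 * Y * e / lam) g e hlam
      hk hδ hg hSg hEe ?_ ?_ ?_
    · have h6 : ENNReal.ofReal (2 ^ n * D) * ENNReal.ofReal (Y ^ 2 * e) ≤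
          ENNReal.ofReal (2 ^ n * D) * volume (E ∩ boxD W a0 u0 s0 (4 * e / (lam * Y))) := by
        have c2 : (2 : ℝ≥0∞) ^ n = ENNReal.ofReal (2 ^ n) := by
          rw [ENNReal.ofReal_pow (by norm_num)]; norm_num
        rw [← mul_assoc, c2, ← ENNReal.ofReal_mul (by positivity), mul_comm _ ((2 : ℝ) ^ n)] at hst
        refine le_trans ?_ hst
        rw [← ENNReal.ofReal_mul (by positivity)]
        refine ENNReal.ofReal_le_ofReal ?_
        calc 2 ^ n * D * (Y ^ 2 * e) = (Y * e) * (2 ^ n * Y * D) := by ring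
          _ ≤ (Y * e) * g := by gcongr
          _ = _ := by field_simp
      rwa [ENNReal.mul_le_mul_iff_right (by simp; positivity) ENNReal.ofReal_ne_top] at h6
    · intro a ha
      refine (hL _ (hSG a ha)).trans (le_of_eq ?_)
      rw [← measure_preimage_add volume u0]
      congr 1
      ext u
      simp only [Set.mem_preimage, Set.mem_ofPred_eq]
      have : s0 - a ⬝ᵥ u0 + a ⬝ᵥ (u0 + u) = s0 + a ⬝ᵥ u := by rw [dotProduct_add]; ring
      rw [this]
    · rw [← hDdef]
      calc 2 ^ n * D * e = e / Y * (2 ^ n * Y * D) := by field_simp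
        _ ≤ e / Y * g := by gcongr
        _ = _ := by field_simp
    · rw [← hDdef]
      calc (2 * (2 * Y * e / lam)) ^ n = 4 ^ n * Y ^ n * (e / lam) ^ n := by
            rw [← mul_pow, ← mul_pow]; congr 1; ring
        _ ≤ 4 ^ n * Y * (e / lam) ^ n := by
            gcongr
            exact pow_le_of_le_one hY0.le hY1 (by omega)
        _ = (4 ^ (n + 1) * Y * (e / lam) ^ n) / 4 := by rw [pow_succ]; ring
        _ ≤ (D * lam) / 4 := by gcongr
        _ = _ := by ring


lemma exists_axes {n : ℕ} (W : Matrix (Fin n) (Fin n) ℝ) (hW : W.det ≠ 0) :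
    ∃ (b : OrthonormalBasis (Fin n) ℝ (Vec n)) (σ : Fin n → ℝ), (∀ j, 0 < σ j) ∧ ∏ j, σ j = |W.det| ∧
      ∀ (z : Vec n) (j : Fin n) (k : ℝ), 0 < k → ‖W.mulVec z.ofLp‖ ≤ k → σ j * |⟪z, b j⟫| < (n + 1) * k := by
  have hA : (W.conjTranspose * W).IsHermitian := Matrix.isHermitian_conjTranspose_mul_self W
  have hpos : (W.conjTranspose * W).PosDef :=
    Matrix.PosDef.conjTranspose_mul_self W
      (Matrix.mulVec_injective_of_isUnit ((Matrix.isUnit_iff_isUnit_det _).mpr hW.isUnit))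
  have hμ : ∀ j, 0 < hA.eigenvalues j := fun j => hpos.eigenvalues_pos j
  refine ⟨hA.eigenvectorBasis, fun j => √(hA.eigenvalues j), fun j => Real.sqrt_pos.mpr (hμ j), ?_, ?_⟩
  · have h1 := hA.det_eq_prod_eigenvalues
    rw [Matrix.det_mul, Matrix.det_conjTranspose] at h1
    simp only [star_trivial, RCLike.ofReal_real_eq_id, id_eq] at h1
    rw [← Real.sqrt_prod _ (fun j _ => (hμ j).le), ← h1, Real.sqrt_mul_self_eq_abs]
  · intro z j k hk hz
    set μ := hA.eigenvalues j with hμj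
    set v : Fin n → ℝ := (hA.eigenvectorBasis j).ofLp with hv
    have h1 : (W.conjTranspose * W).mulVec v = μ • v := hA.mulVec_eigenvectorBasis j
    have key : ∀ x : Fin n → ℝ, W.mulVec x ⬝ᵥ W.mulVec v = μ * (x ⬝ᵥ v) := by
      intro x
      have : W.mulVec x ⬝ᵥ W.mulVec v = x ⬝ᵥ (W.conjTranspose * W).mulVec v := by
        rw [Matrix.conjTranspose_eq_transpose_of_trivial, ← Matrix.mulVec_mulVec, Matrix.dotProduct_mulVec x,
          Matrix.vecMul_transpose]
      rw [this, h1, dotProduct_smul, smul_eq_mul]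
    have hvv : v ⬝ᵥ v = 1 := by
      have h2 : ⟪hA.eigenvectorBasis j, hA.eigenvectorBasis j⟫ = (1 : ℝ) := by
        rw [real_inner_self_eq_norm_sq, hA.eigenvectorBasis.orthonormal.1 j]; norm_num
      rw [EuclideanSpace.inner_eq_star_dotProduct] at h2
      rw [star_trivial] at h2
      exact h2
    have hp : ⟪z, hA.eigenvectorBasis j⟫ = z.ofLp ⬝ᵥ v := by
      rw [EuclideanSpace.inner_eq_star_dotProduct, dotProduct_comm]
      simp [hv]
    set p := z.ofLp ⬝ᵥ v with hpdef
    have cs := Finset.sum_mul_sq_le_sq_mul_sq Finset.univ (W.mulVec z.ofLp) (W.mulVec v)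
    have cs' : (μ * p) ^ 2 ≤ (∑ i, (W.mulVec z.ofLp i) ^ 2) * μ := by
      have e1 : ∑ i, W.mulVec z.ofLp i * W.mulVec v i = μ * p := key _
      have e2 : ∑ i, (W.mulVec v i) ^ 2 = μ := by
        have := key v
        rw [hvv, mul_one] at this
        rw [← this]
        simp only [dotProduct, sq]
      rwa [e1, e2] at cs
    have hq : ∑ i, (W.mulVec z.ofLp i) ^ 2 ≤ n * k ^ 2 := by
      calc _ ≤ ∑ i : Fin n, k ^ 2 := by
            refine Finset.sum_le_sum fun i _ => ?_
            refine sq_le_sq' ?_ ?_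
            · have := (norm_le_pi_norm (W.mulVec z.ofLp) i).trans hz
              rw [Real.norm_eq_abs] at this
              linarith [neg_abs_le (W.mulVec z.ofLp i)]
            · have := (norm_le_pi_norm (W.mulVec z.ofLp) i).trans hz
              rw [Real.norm_eq_abs] at this
              linarith [le_abs_self (W.mulVec z.ofLp i)]
        _ = _ := by simp
    have hmp : μ * p ^ 2 ≤ n * k ^ 2 := by
      have : μ * (μ * p ^ 2) ≤ μ * (n * k ^ 2) := by
        have := mul_le_mul_of_nonneg_right hq (hμ j).le
        nlinarith
      exact le_of_mul_le_mul_left this (hμ j)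
    rw [hp]
    refine lt_of_pow_lt_pow_left₀ 2 (by positivity) ?_
    rw [mul_pow, Real.sq_sqrt (hμ j).le, sq_abs]
    have hn0 : (0 : ℝ) ≤ n := by positivity
    have : (0 : ℝ) < (n ^ 2 + n + 1) * k ^ 2 := by positivity
    nlinarith

lemma volume_slab {n : ℕ} (b : OrthonormalBasis (Fin n) ℝ (Vec n)) (r : Fin n → ℝ) (ρ : ℝ)
    (hr : ∀ j, 0 < r j) (y0 : Vec n) (l : Vec n → ℝ) (hl : Continuous l) :
    volume {y : Pt n | (∀ j, |⟪y.1 - y0, b j⟫| < r j) ∧ |y.2 - l y.1| < ρ} ≤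
      ENNReal.ofReal (2 * ρ * ∏ j, (2 * r j)) := by
  have mQ : MeasurableSet {x : Vec n | ∀ j, |⟪x - y0, b j⟫| < r j} := by
    refine measSet_forall fun j => ?_
    have : Continuous fun x : Vec n => |⟪x - y0, b j⟫| := by fun_prop
    exact (isOpen_lt this continuous_const).measurableSet
  set Q := {x : Vec n | ∀ j, |⟪x - y0, b j⟫| < r j} with hQ
  have vQ : volume Q = ENNReal.ofReal (∏ j, (2 * r j)) := by
    have h1 := (PiLp.volume_preserving_ofLp (Fin n)).comp b.measurePreserving_repr
    have h2 : Q = (WithLp.ofLp ∘ b.repr) ⁻¹'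
        (Set.univ.pi fun j => Set.Ioo (⟪y0, b j⟫ - r j) (⟪y0, b j⟫ + r j)) := by
      ext x
      simp only [hQ, Set.mem_ofPred_eq, Set.mem_preimage, Function.comp, Set.mem_univ_pi, Set.mem_Ioo,
        OrthonormalBasis.repr_apply_apply, inner_sub_left, abs_lt]
      refine forall_congr' fun j => ?_
      rw [real_inner_comm x (b j)]
      constructor <;> rintro ⟨h, h'⟩ <;> constructor <;> linarith
    rw [h2, h1.measure_preimage (MeasurableSet.univ_pi fun j => measurableSet_Ioo).nullMeasurableSet,
      Real.volume_pi_Ioo, ENNReal.ofReal_prod_of_nonneg]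
    · refine Finset.prod_congr rfl fun j _ => ?_
      congr 1; ring
    · intro j _; have := hr j; positivity
  have mS : MeasurableSet {y : Pt n | (∀ j, |⟪y.1 - y0, b j⟫| < r j) ∧ |y.2 - l y.1| < ρ} := by
    refine (measurable_fst mQ).inter ?_
    have : Continuous fun y : Pt n => |y.2 - l y.1| := by fun_prop
    exact (isOpen_lt this continuous_const).measurableSet
  rw [Measure.volume_eq_prod, Measure.prod_apply mS]
  calc _ ≤ ∫⁻ x, Q.indicator (fun _ => ENNReal.ofReal (2 * ρ)) x := by
        refine lintegral_mono fun x => ?_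
        by_cases hx : x ∈ Q
        · rw [Set.indicator_of_mem hx]
          refine (measure_mono (t := Set.Ioo (l x - ρ) (l x + ρ)) ?_).trans ?_
          · intro s hs
            have := abs_lt.mp hs.2
            dsimp only at this
            constructor <;> linarith
          · rw [Real.volume_Ioo]
            exact ENNReal.ofReal_le_ofReal (by linarith)
        · rw [Set.indicator_of_notMem hx]
          refine le_of_eq ?_
          convert measure_empty (μ := (volume : Measure ℝ))
          ext s
          simp only [Set.mem_preimage, Set.mem_ofPred_eq, Set.mem_empty_iff_false, iff_false, not_and]
          intro h; exact absurd h hx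
    _ = _ := by
        rw [lintegral_indicator mQ, setLIntegral_const, vQ, ← ENNReal.ofReal_mul' ]
        exact Finset.prod_nonneg fun j _ => by have := hr j; positivity

lemma snd_ballI {n : ℕ} (x0 : Pt n) (y0 : Vec n) (e : Fin n → Vec n) (r rs : Fin n → ℝ) (ρ : ℝ)
    (hr : ∀ j, 0 < r j) :
    Prod.snd '' ballI n (x0, (y0, x0.2 - ‖y0 - x0.1‖ ^ 2)) e r rs ρ =
      {y : Pt n | (∀ j, |⟪y.1 - y0, e j⟫| < rs j) ∧ |y.2 - (x0.2 - ‖y.1 - x0.1‖ ^ 2)| < ρ} := by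
  ext y
  constructor
  · rintro ⟨z, ⟨h1, h2, h3, h4, h5⟩, rfl⟩
    refine ⟨h4, ?_⟩
    convert h5 using 2
    ring
  · rintro ⟨h1, h2⟩
    refine ⟨((x0.1, y.2 + ‖y.1 - x0.1‖ ^ 2), y), ⟨?_, ?_, ?_, h1, ?_⟩, rfl⟩
    · simp
    · intro j; simpa using hr j
    · convert h2 using 2
      dsimp only
      rw [norm_sub_rev x0.1 y0]
      ring
    · convert h2 using 2
      ring


lemma boxToBall {n : ℕ} (E : Set (Pt n)) (b : OrthonormalBasis (Fin n) ℝ (Vec n)) (r : Fin n → ℝ)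
    (hr : ∀ j, 0 < r j) (ρ e M v : ℝ) (hρ : 0 < ρ) (he : 0 < e) (hM : 1 ≤ M) (hv : 0 ≤ v)
    (y0 : Vec n) (x0 : Pt n) (hEe : volume E = ENNReal.ofReal e)
    (hvol : 2 * ρ * ∏ j, (2 * r j) ≤ M * e)
    (hE : ENNReal.ofReal v ≤ volume (E ∩ {y : Pt n | (∀ j, |⟪y.1 - y0, b j⟫| < r j) ∧
      |y.2 - (x0.2 - ‖y.1 - x0.1‖ ^ 2)| < ρ})) :
    ∃ (zb : Pt n × Pt n) (e' : Fin n → Vec n) (r' rs : Fin n → ℝ) (ρ' : ℝ),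
      IsBallParams n zb e' r' rs ρ' ∧
      volume (Prod.snd '' ballI n zb e' r' rs ρ') ≤ volume E ∧
      ENNReal.ofReal (v / (4 * M)) ≤ volume (Prod.snd '' ballI n zb e' r' rs ρ' ∩ E) := by
  set q := ⌈M⌉₊ with hq
  have hqM : M ≤ q := Nat.le_ceil M
  have hq2 : (q : ℝ) ≤ 2 * M := by
    have := Nat.ceil_lt_add_one (a := M) (by linarith)
    linarith
  have hq0 : (0 : ℝ) < q := by linarith
  have hρ' : 0 < ρ / q := by positivity
  set X : ℕ → Pt n := fun i => (x0.1, x0.2 + ((i : ℝ) - q) * (ρ / q)) with hX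
  set P : ℕ → Set (Pt n) := fun i => {y : Pt n | (∀ j, |⟪y.1 - y0, b j⟫| < r j) ∧
      |y.2 - ((X i).2 - ‖y.1 - (X i).1‖ ^ 2)| < ρ / q} with hP
  have hcov : E ∩ {y : Pt n | (∀ j, |⟪y.1 - y0, b j⟫| < r j) ∧
      |y.2 - (x0.2 - ‖y.1 - x0.1‖ ^ 2)| < ρ} ⊆ ⋃ i ∈ Finset.range (2 * q), (P i ∩ E) := by
    rintro y ⟨hyE, hy1, hy2⟩
    set τ := y.2 - (x0.2 - ‖y.1 - x0.1‖ ^ 2) with hτ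
    set w := τ / (ρ / q) with hw
    have hwτ : τ = w * (ρ / q) := by rw [hw]; field_simp
    have hw2 : |w| < q := by
      rw [hw, abs_div, abs_of_pos hρ', div_lt_iff₀ hρ']
      have : (q : ℝ) * (ρ / q) = ρ := by field_simp
      rwa [this]
    have hw3 := abs_lt.mp hw2
    have hfl : (0 : ℤ) ≤ ⌊w⌋ + q := by
      have : (-(q : ℤ)) ≤ ⌊w⌋ := Int.le_floor.mpr (by push_cast; linarith)
      linarith
    obtain ⟨i, hi⟩ := Int.eq_ofNat_of_zero_le hfl
    have hiR : (i : ℝ) - q = (⌊w⌋ : ℝ) := by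
      have : ((⌊w⌋ + q : ℤ) : ℝ) = ((i : ℤ) : ℝ) := by exact_mod_cast congrArg (Int.cast (R := ℝ)) hi
      push_cast at this
      linarith
    have f1 := Int.floor_le w
    have f2 := Int.lt_floor_add_one w
    rw [Set.mem_iUnion₂]
    refine ⟨i, ?_, ⟨hy1, ?_⟩, hyE⟩
    · rw [Finset.mem_range]
      have : (i : ℝ) < 2 * q := by linarith
      exact_mod_cast this
    · have e1 : y.2 - ((X i).2 - ‖y.1 - (X i).1‖ ^ 2) = (w - ⌊w⌋) * (ρ / q) := by
        have : y.2 - ((X i).2 - ‖y.1 - (X i).1‖ ^ 2) = τ - ((i : ℝ) - q) * (ρ / q) := by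
          simp only [hX, hτ]; ring
        rw [this, hiR, hwτ]; ring
      rw [e1, abs_mul, abs_of_pos hρ', abs_of_nonneg (by linarith)]
      calc _ < 1 * (ρ / q) := by gcongr; linarith
        _ = _ := one_mul _
  have hsum : ENNReal.ofReal v ≤ ∑ i ∈ Finset.range (2 * q), volume (P i ∩ E) :=
    hE.trans ((measure_mono hcov).trans (measure_biUnion_finset_le _ _))
  have hqN : 0 < q := by exact_mod_cast hq0
  obtain ⟨i, hi, hiv⟩ : ∃ i ∈ Finset.range (2 * q), ENNReal.ofReal (v / (4 * M)) ≤ volume (P i ∩ E) := by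
    by_contra! hcon
    have hlt : ∑ i ∈ Finset.range (2 * q), volume (P i ∩ E) <
        ∑ i ∈ Finset.range (2 * q), ENNReal.ofReal (v / (4 * M)) :=
      ENNReal.sum_lt_sum_of_nonempty ⟨0, Finset.mem_range.mpr (by omega)⟩ hcon
    have : ∑ i ∈ Finset.range (2 * q), ENNReal.ofReal (v / (4 * M)) ≤ ENNReal.ofReal v := by
      rw [Finset.sum_const, Finset.card_range, nsmul_eq_mul, ← ENNReal.ofReal_natCast,
        ← ENNReal.ofReal_mul (by positivity)]
      refine ENNReal.ofReal_le_ofReal ?_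
      push_cast
      calc 2 * (q : ℝ) * (v / (4 * M)) ≤ 2 * (2 * M) * (v / (4 * M)) := by gcongr
        _ = v := by field_simp; ring
    exact absurd (hsum.trans_lt hlt) (not_lt.mpr this)
  have hball := snd_ballI (X i) y0 b (fun j => (ρ / q) / r j) r (ρ / q)
    (fun j => div_pos hρ' (hr j))
  refine ⟨(X i, (y0, (X i).2 - ‖y0 - (X i).1‖ ^ 2)), b, fun j => (ρ / q) / r j, r, ρ / q,
    ⟨rfl, hρ', b.orthonormal, fun j => div_pos hρ' (hr j), hr, fun j => div_mul_cancel₀ _ (hr j).ne'⟩, ?_, ?_⟩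
  · rw [hball, hEe]
    refine (volume_slab b r (ρ / q) hr y0 (fun z => (X i).2 - ‖z - (X i).1‖ ^ 2) (by fun_prop)).trans ?_
    refine ENNReal.ofReal_le_ofReal ?_
    calc 2 * (ρ / q) * ∏ j, (2 * r j) = (2 * ρ * ∏ j, (2 * r j)) / q := by ring
      _ ≤ (M * e) / q := by gcongr
      _ ≤ (q * e) / q := by gcongr
      _ = e := by field_simp
  · rw [hball]; exact hiv

def paraLift (n : ℕ) : (Fin n → ℝ) × ℝ → Pt n := fun p => (WithLp.toLp 2 p.1, p.2 - ‖WithLp.toLp 2 p.1‖ ^ 2)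

lemma paraLift_mp (n : ℕ) : MeasurePreserving (paraLift n) := by
  have h1 : MeasurePreserving (WithLp.toLp 2 : (Fin n → ℝ) → Vec n) := PiLp.volume_preserving_toLp (Fin n)
  refine MeasurePreserving.skew_product (g := fun u s => s - ‖WithLp.toLp 2 u‖ ^ 2) h1 ?_ ?_
  · have : Continuous fun p : (Fin n → ℝ) × ℝ => p.2 - ‖(WithLp.toLp 2 p.1 : Vec n)‖ ^ 2 := by fun_prop
    exact this.measurable
  · refine Filter.Eventually.of_forall fun u => ?_
    exact (measurePreserving_sub_right volume _).map_eq

lemma transferBall {n : ℕ} (hn : 1 ≤ n) (E : Set (Pt n)) (hE : MeasurableSet E)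
    (G : Set ((Fin n → ℝ) × ℝ)) (hG : MeasurableSet G)
    (e f lam N Y : ℝ) (he : 0 < e) (hf : 0 < f) (hlam : 0 < lam)
    (hEe : volume E = ENNReal.ofReal e) (hGf : volume G = ENNReal.ofReal f)
    (hGN : G ⊆ Metric.closedBall 0 N)
    (hL : ∀ p ∈ G, ENNReal.ofReal lam ≤ volume {u : Fin n → ℝ | paraLift n (u, p.2 + p.1 ⬝ᵥ u) ∈ E})
    (hY : Y = lam ^ (n + 2) * f / (e ^ (n + 1) * (2 ^ n * (16 * (n + 2)) * 4 ^ (n + 1)))) :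
    ∃ (zb : Pt n × Pt n) (e' : Fin n → Vec n) (r' rs : Fin n → ℝ) (ρ' : ℝ),
      IsBallParams n zb e' r' rs ρ' ∧
      volume (Prod.snd '' ballI n zb e' r' rs ρ') ≤ volume E ∧
      ENNReal.ofReal (Y ^ (n + 4) / (4 * (2 * (n + 1)) ^ (n + 1)) * e) ≤
        volume (Prod.snd '' ballI n zb e' r' rs ρ' ∩ E) := by
  have hmp := paraLift_mp n
  obtain ⟨u0, s0, W, a0, k, hW, hY0, hY1, hk, hkD, hvol⟩ := core hn (paraLift n ⁻¹' E) G (hmp.measurable hE) hG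
    e f lam N Y he hf hlam (by rw [hmp.measure_preimage hE.nullMeasurableSet, hEe]) hGf hGN hL hY
  obtain ⟨b, σ, hσ, hσD, hax⟩ := exists_axes W hW
  set x0 : Pt n := (WithLp.toLp 2 ((1 / 2 : ℝ) • a0), s0 - a0 ⬝ᵥ u0 + ‖(WithLp.toLp 2 ((1 / 2 : ℝ) • a0) : Vec n)‖ ^ 2) with hx0
  set y0 : Vec n := WithLp.toLp 2 u0 with hy0
  set r : Fin n → ℝ := fun j => (n + 1) * k / σ j with hr
  have hr0 : ∀ j, 0 < r j := fun j => by have := hσ j; positivity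
  set M : ℝ := (2 * (n + 1)) ^ (n + 1) / Y ^ (n + 2) with hM
  have hM1 : 1 ≤ M := by
    rw [hM, le_div_iff₀ (by positivity), one_mul]
    calc Y ^ (n + 2) ≤ 1 := pow_le_one₀ hY0.le hY1
      _ ≤ _ := one_le_pow₀ (by have : (0 : ℝ) ≤ n := by positivity
                               linarith)
  have hD : 0 < |W.det| := abs_pos.mpr hW
  have hb := boxToBall E b r hr0 ((n + 1) * k) e M (Y ^ 2 * e) (by positivity) he hM1 (by positivity) y0 x0 hEe
    ?_ ?_
  · have e1 : Y ^ 2 * e / (4 * M) = Y ^ (n + 4) / (4 * (2 * (n + 1)) ^ (n + 1)) * e := by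
      rw [hM, show n + 4 = (n + 2) + 2 by ring, pow_add Y (n + 2) 2]
      field_simp
    rwa [e1] at hb
  · have e2 : 2 * ((n + 1) * k) * ∏ j, (2 * r j) = (2 * (n + 1)) ^ (n + 1) * (k ^ (n + 1) / |W.det|) := by
      have : ∏ j, (2 * r j) = (2 * (n + 1) * k) ^ n / |W.det| := by
        rw [← hσD]
        have : ∀ j, 2 * r j = (2 * (n + 1) * k) / σ j := fun j => by simp only [hr]; ring
        simp_rw [this]
        rw [Finset.prod_div_distrib]
        simp
      rw [this, mul_pow, pow_succ (2 * ((n : ℝ) + 1)) n, pow_succ k n]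
      ring
    rw [e2, hM, div_mul_eq_mul_div, mul_div_assoc]
    gcongr ?_ * ?_
    rw [div_le_div_iff₀ hD (by positivity)]
    exact hkD
  · refine hvol.trans ?_
    have mB : MeasurableSet {y : Pt n | (∀ j, |⟪y.1 - y0, b j⟫| < r j) ∧
      |y.2 - (x0.2 - ‖y.1 - x0.1‖ ^ 2)| < (n + 1) * k} := by
      refine MeasurableSet.inter (measSet_forall fun j => ?_) ?_
      · have : Continuous fun y : Pt n => |⟪y.1 - y0, b j⟫| := by fun_prop
        exact (isOpen_lt this continuous_const).measurableSet
      · have : Continuous fun y : Pt n => |y.2 - (x0.2 - ‖y.1 - x0.1‖ ^ 2)| := by fun_prop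
        exact (isOpen_lt this continuous_const).measurableSet
    rw [← hmp.measure_preimage (hE.inter mB).nullMeasurableSet]
    refine measure_mono ?_
    rintro ⟨u, s⟩ ⟨hpE, hp1, hp2⟩
    dsimp only at hp1 hp2
    refine ⟨hpE, ?_, ?_⟩
    · intro j
      have := hax (WithLp.toLp 2 (u - u0)) j k hk hp1
      have hj := hσ j
      simp only [hr]
      rw [lt_div_iff₀ hj, mul_comm]
      exact this
    · have e3 : (paraLift n (u, s)).2 - (x0.2 - ‖(paraLift n (u, s)).1 - x0.1‖ ^ 2) = s - s0 - a0 ⬝ᵥ (u - u0) := by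
        simp only [paraLift, hx0]
        rw [norm_sub_sq_real]
        have : ⟪(WithLp.toLp 2 u : Vec n), WithLp.toLp 2 ((1 / 2 : ℝ) • a0)⟫ = 1 / 2 * (a0 ⬝ᵥ u) := by
          rw [EuclideanSpace.inner_eq_star_dotProduct]
          simp
        rw [this, dotProduct_sub]
        ring
      rw [e3]
      refine lt_of_le_of_lt hp2 ?_
      linarith


def dirLift (n : ℕ) : Pt n → (Fin n → ℝ) × ℝ := fun x => (x.1.ofLp, x.2 - ‖x.1‖ ^ 2)

lemma dirLift_mp (n : ℕ) : MeasurePreserving (dirLift n) := by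
  have h1 : MeasurePreserving (WithLp.ofLp : Vec n → (Fin n → ℝ)) := PiLp.volume_preserving_ofLp (Fin n)
  refine MeasurePreserving.skew_product (g := fun (u : Vec n) s => s - ‖u‖ ^ 2) h1 ?_ ?_
  · have : Continuous fun p : Vec n × ℝ => p.2 - ‖p.1‖ ^ 2 := by fun_prop
    exact this.measurable
  · refine Filter.Eventually.of_forall fun u => ?_
    exact (measurePreserving_sub_right volume _).map_eq

lemma volume_scale_le {n : ℕ} (G : Set ((Fin n → ℝ) × ℝ)) (hG : MeasurableSet G) :
    volume {p : (Fin n → ℝ) × ℝ | ((2 : ℝ) • p.1, p.2) ∈ G} ≤ volume G := by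
  have mc : Measurable fun p : (Fin n → ℝ) × ℝ => ((2 : ℝ) • p.1, p.2) := by fun_prop
  have mG : MeasurableSet {p : (Fin n → ℝ) × ℝ | ((2 : ℝ) • p.1, p.2) ∈ G} := mc hG
  rw [Measure.volume_eq_prod, Measure.prod_apply_symm mG, Measure.prod_apply_symm hG]
  refine lintegral_mono fun s => ?_
  have h := Measure.addHaar_preimage_smul (volume : Measure (Fin n → ℝ)) (two_ne_zero (α := ℝ))
    ((fun x => (x, s)) ⁻¹' G)
  have h2 : ((fun x : Fin n → ℝ => (x, s)) ⁻¹' {p : (Fin n → ℝ) × ℝ | ((2 : ℝ) • p.1, p.2) ∈ G}) =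
      (fun x : Fin n → ℝ => (2 : ℝ) • x) ⁻¹' ((fun x => (x, s)) ⁻¹' G) := rfl
  dsimp only
  rw [h2, h]
  refine mul_le_of_le_one_left' ?_
  rw [ENNReal.ofReal_le_one, abs_of_nonneg (by positivity)]
  exact inv_le_one_of_one_le₀ (one_le_pow₀ (by norm_num))

lemma measurable_paraLift_inc (n : ℕ) :
    Measurable fun q : ((Fin n → ℝ) × ℝ) × (Fin n → ℝ) => paraLift n (q.2, q.1.2 + q.1.1 ⬝ᵥ q.2) := by
  refine (paraLift_mp n).measurable.comp ?_
  have : Continuous fun q : ((Fin n → ℝ) × ℝ) × (Fin n → ℝ) => (q.2, q.1.2 + q.1.1 ⬝ᵥ q.2) := by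
    simp only [dotProduct]; fun_prop
  exact this.measurable

lemma radonT_eq {n : ℕ} (E : Set (Pt n)) (hE : MeasurableSet E) (x : Pt n) :
    radonT n (E.indicator 1) x =
      volume {u : Fin n → ℝ | paraLift n (u, (x.2 - ‖x.1‖ ^ 2) + ((2 : ℝ) • x.1.ofLp) ⬝ᵥ u) ∈ E} := by
  have m1 : Measurable fun u : Fin n → ℝ => paraLift n (u, (x.2 - ‖x.1‖ ^ 2) + ((2 : ℝ) • x.1.ofLp) ⬝ᵥ u) :=
    (measurable_paraLift_inc n).comp ((measurable_const (a := ((2 : ℝ) • x.1.ofLp, x.2 - ‖x.1‖ ^ 2))).prodMk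
      measurable_id)
  rw [← lintegral_ind hE m1]
  unfold radonT
  have h1 : ∀ t : Vec n, E.indicator (1 : Pt n → ℝ≥0∞) (x.1 - t, x.2 - ‖t‖ ^ 2) =
      (fun y : Vec n => E.indicator (1 : Pt n → ℝ≥0∞) (y, x.2 - ‖x.1 - y‖ ^ 2)) (x.1 - t) := by
    intro t; simp
  simp_rw [h1]
  rw [lintegral_sub_left_eq_self (fun y : Vec n => E.indicator (1 : Pt n → ℝ≥0∞) (y, x.2 - ‖x.1 - y‖ ^ 2)) x.1]
  rw [← (PiLp.volume_preserving_toLp (Fin n)).lintegral_comp_emb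
    (MeasurableEquiv.toLp 2 (Fin n → ℝ)).measurableEmbedding]
  refine lintegral_congr fun u => ?_
  have : x.2 - ‖x.1 - WithLp.toLp 2 u‖ ^ 2 =
      x.2 - ‖x.1‖ ^ 2 + ((2 : ℝ) • x.1.ofLp) ⬝ᵥ u - ‖(WithLp.toLp 2 u : Vec n)‖ ^ 2 := by
    rw [norm_sub_sq_real]
    have : ⟪x.1, WithLp.toLp 2 u⟫ = x.1.ofLp ⬝ᵥ u := by
      rw [EuclideanSpace.inner_eq_star_dotProduct, dotProduct_comm]
      simp
    rw [this, smul_dotProduct, smul_eq_mul]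
    ring
  rw [this]
  rfl

lemma extractG {n : ℕ} (E : Set (Pt n)) (hE : MeasurableSet E) (ε e : ℝ) (hε : 0 < ε) (he : 0 < e)
    (hEe : volume E = ENNReal.ofReal e)
    (h : ENNReal.ofReal ε * volume E ^ (((n + 1 : ℕ) : ℝ) / ((n + 1 : ℕ) + 1)) ≤
          weakN n (((n + 1 : ℕ) : ℝ) + 1) (radonT n (E.indicator 1))) :
    ∃ (G : Set ((Fin n → ℝ) × ℝ)) (f lam N : ℝ), MeasurableSet G ∧ 0 < f ∧ 0 < lam ∧
      volume G = ENNReal.ofReal f ∧ G ⊆ Metric.closedBall 0 N ∧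
      (∀ p ∈ G, ENNReal.ofReal lam ≤ volume {u : Fin n → ℝ | paraLift n (u, p.2 + p.1 ⬝ᵥ u) ∈ E}) ∧
      (ε / 2) ^ (n + 2) * e ^ (n + 1) ≤ lam ^ (n + 2) * f := by
  have hEp : ENNReal.ofReal (ε / 2) * volume E ^ (((n + 1 : ℕ) : ℝ) / ((n + 1 : ℕ) + 1)) <
      ENNReal.ofReal ε * volume E ^ (((n + 1 : ℕ) : ℝ) / ((n + 1 : ℕ) + 1)) := by
    have hpos : (0 : ℝ) < ((n + 1 : ℕ) : ℝ) / ((n + 1 : ℕ) + 1) := by positivity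
    refine ENNReal.mul_lt_mul_left ?_ ?_ ?_
    · rw [hEe, ENNReal.ofReal_rpow_of_pos he]
      simp only [ne_eq, ENNReal.ofReal_eq_zero, not_le]
      positivity
    · rw [hEe, ENNReal.ofReal_rpow_of_pos he]
      exact ENNReal.ofReal_ne_top
    · exact (ENNReal.ofReal_lt_ofReal_iff hε).mpr (by linarith)
  have h1 := hEp.trans_le h
  unfold weakN at h1
  rw [lt_iSup_iff] at h1
  obtain ⟨lam, h1⟩ := h1
  rw [lt_iSup_iff] at h1
  obtain ⟨hlam, h1⟩ := h1
  set G0 : Set ((Fin n → ℝ) × ℝ) :=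
    {p | ENNReal.ofReal lam < volume {u : Fin n → ℝ | paraLift n (u, p.2 + p.1 ⬝ᵥ u) ∈ E}} with hG0
  have mG0 : MeasurableSet G0 := by
    have m1 : Measurable fun p : (Fin n → ℝ) × ℝ =>
        volume {u : Fin n → ℝ | paraLift n (u, p.2 + p.1 ⬝ᵥ u) ∈ E} :=
      measurable_measure_prodMk_left ((measurable_paraLift_inc n) hE)
    exact measurableSet_lt measurable_const m1
  have hF : volume {x : Pt n | ENNReal.ofReal lam < radonT n (E.indicator 1) x} ≤ volume G0 := by
    have e1 : {x : Pt n | ENNReal.ofReal lam < radonT n (E.indicator 1) x} =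
        dirLift n ⁻¹' {p : (Fin n → ℝ) × ℝ | ((2 : ℝ) • p.1, p.2) ∈ G0} := by
      ext x
      simp only [Set.mem_ofPred_eq, Set.mem_preimage, hG0, dirLift, radonT_eq E hE x]
    have mc : Measurable fun p : (Fin n → ℝ) × ℝ => ((2 : ℝ) • p.1, p.2) := by fun_prop
    have mG1 : MeasurableSet {p : (Fin n → ℝ) × ℝ | ((2 : ℝ) • p.1, p.2) ∈ G0} := mc mG0
    rw [e1, (dirLift_mp n).measure_preimage mG1.nullMeasurableSet]
    exact volume_scale_le G0 mG0
  have h2 : ENNReal.ofReal (ε / 2) ^ (n + 2) * volume E ^ (n + 1) < ENNReal.ofReal lam ^ (n + 2) * volume G0 := by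
    have h3 := ENNReal.rpow_lt_rpow h1 (z := ((n + 2 : ℕ) : ℝ)) (by positivity)
    have hq : (((n + 1 : ℕ) : ℝ) + 1) = ((n + 2 : ℕ) : ℝ) := by push_cast; ring
    rw [ENNReal.mul_rpow_of_nonneg _ _ (by positivity), ENNReal.mul_rpow_of_nonneg _ _ (by positivity),
      ← ENNReal.rpow_mul, ← ENNReal.rpow_mul, hq, div_mul_cancel₀ _ (by positivity),
      div_mul_cancel₀ _ (by positivity), ENNReal.rpow_one, ENNReal.rpow_natCast, ENNReal.rpow_natCast,
      ENNReal.rpow_natCast] at h3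
    exact h3.trans_le (by gcongr)
  have hU : G0 = ⋃ N : ℕ, G0 ∩ Metric.closedBall 0 (N : ℝ) := by
    rw [← Set.inter_iUnion]
    rw [Metric.iUnion_closedBall_nat, Set.inter_univ]
  have hmono : Monotone fun N : ℕ => G0 ∩ Metric.closedBall (0 : (Fin n → ℝ) × ℝ) (N : ℝ) := by
    intro a b hab
    exact Set.inter_subset_inter_right _ (Metric.closedBall_subset_closedBall (by exact_mod_cast hab))
  rw [hU, hmono.measure_iUnion, ENNReal.mul_iSup, lt_iSup_iff] at h2
  obtain ⟨N, h2⟩ := h2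
  set G := G0 ∩ Metric.closedBall (0 : (Fin n → ℝ) × ℝ) (N : ℝ) with hG
  have mG : MeasurableSet G := mG0.inter Metric.isClosed_closedBall.measurableSet
  have hGt : volume G ≠ ⊤ :=
    ((measure_mono Set.inter_subset_right).trans_lt measure_closedBall_lt_top).ne
  have hGf : volume G = ENNReal.ofReal (volume G).toReal := (ENNReal.ofReal_toReal hGt).symm
  have hf : 0 < (volume G).toReal := by
    refine ENNReal.toReal_pos ?_ hGt
    intro h0
    rw [h0, mul_zero] at h2
    exact absurd h2 (by simp)
  refine ⟨G, (volume G).toReal, lam, N, mG, hf, hlam, hGf, Set.inter_subset_right, fun p hp => le_of_lt hp.1, ?_⟩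
  rw [hGf, hEe, ← ENNReal.ofReal_pow (by positivity), ← ENNReal.ofReal_pow he.le, ← ENNReal.ofReal_pow hlam.le,
    ← ENNReal.ofReal_mul (by positivity), ← ENNReal.ofReal_mul (by positivity)] at h2
  exact ((ENNReal.ofReal_lt_ofReal_iff (by positivity)).mp h2).le

lemma main_n (n : ℕ) (hn : 1 ≤ n) :
    ∃ c C : ℝ, 0 < c ∧ 0 < C ∧
      ∀ (ε : ℝ), 0 < ε →
      ∀ (E : Set (Pt n)), MeasurableSet E → 0 < volume E → volume E < ⊤ →
        ENNReal.ofReal ε * volume E ^ (((n + 1 : ℕ) : ℝ) / ((n + 1 : ℕ) + 1)) ≤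
          weakN n (((n + 1 : ℕ) : ℝ) + 1) (radonT n (E.indicator 1)) →
        ∃ (zb : Pt n × Pt n) (e : Fin n → Vec n)
          (r rs : Fin n → ℝ) (ρ : ℝ),
          IsBallParams n zb e r rs ρ ∧
          volume (Prod.snd '' ballI n zb e r rs ρ) ≤ volume E ∧
          ENNReal.ofReal (c * ε ^ C) * volume E ≤
            volume (Prod.snd '' ballI n zb e r rs ρ ∩ E) := by
  set C0 : ℝ := 2 ^ n * (16 * (n + 2)) * 4 ^ (n + 1) with hC0
  have hC0p : 0 < C0 := by positivity
  refine ⟨(1 / (2 ^ (n + 2) * C0)) ^ (n + 4) / (4 * (2 * (n + 1)) ^ (n + 1)), (((n + 2) * (n + 4) : ℕ) : ℝ),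
    by positivity, by positivity, ?_⟩
  intro ε hε E hE hE0 hEt hweak
  have hEe : volume E = ENNReal.ofReal (volume E).toReal := (ENNReal.ofReal_toReal hEt.ne).symm
  have he : 0 < (volume E).toReal := ENNReal.toReal_pos hE0.ne' hEt.ne
  set e := (volume E).toReal with hedef
  obtain ⟨G, f, lam, N, mG, hf, hlam, hGf, hGN, hL, hineq⟩ := extractG E hE ε e hε he hEe hweak
  obtain ⟨zb, e', r', rs, ρ', hb1, hb2, hb3⟩ := transferBall hn E hE G mG e f lam N _ he hf hlam hEe hGf hGN hL rfl
  refine ⟨zb, e', r', rs, ρ', hb1, hb2, le_trans ?_ hb3⟩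
  rw [hEe, ← ENNReal.ofReal_mul (by positivity)]
  refine ENNReal.ofReal_le_ofReal ?_
  rw [Real.rpow_natCast, pow_mul]
  have hY : 1 / (2 ^ (n + 2) * C0) * ε ^ (n + 2) ≤ lam ^ (n + 2) * f / (e ^ (n + 1) * C0) := by
    calc 1 / (2 ^ (n + 2) * C0) * ε ^ (n + 2) = (ε / 2) ^ (n + 2) * e ^ (n + 1) / (e ^ (n + 1) * C0) := by
          rw [div_pow]; field_simp
      _ ≤ _ := by gcongr
  have hY4 : (1 / (2 ^ (n + 2) * C0)) ^ (n + 4) * (ε ^ (n + 2)) ^ (n + 4) ≤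
      (lam ^ (n + 2) * f / (e ^ (n + 1) * C0)) ^ (n + 4) := by
    rw [← mul_pow]
    exact pow_le_pow_left₀ (by positivity) hY _
  rw [div_mul_eq_mul_div]
  gcongr


/-- Theorem thm:single (i), first half: if
`‖T χ_E‖_{L^{d+1,∞}} ≥ ε |E|^{d/(d+1)}` then `E` has a large intersection with
`π*(ℬ)` for some ball `ℬ` with `|π*(ℬ)| ≤ |E|`. -/
theorem stmt8 (d : ℕ) (hd : 2 ≤ d) :
    ∃ c C : ℝ, 0 < c ∧ 0 < C ∧
      ∀ (ε : ℝ), 0 < ε →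
      ∀ (E : Set (Pt (d - 1))), MeasurableSet E → 0 < volume E → volume E < ⊤ →
        ENNReal.ofReal ε * volume E ^ ((d : ℝ) / (d + 1)) ≤
          weakN (d - 1) ((d : ℝ) + 1) (radonT (d - 1) (E.indicator 1)) →
        ∃ (zb : Pt (d - 1) × Pt (d - 1)) (e : Fin (d - 1) → Vec (d - 1))
          (r rs : Fin (d - 1) → ℝ) (ρ : ℝ),
          IsBallParams (d - 1) zb e r rs ρ ∧
          volume (Prod.snd '' ballI (d - 1) zb e r rs ρ) ≤ volume E ∧
          ENNReal.ofReal (c * ε ^ C) * volume E ≤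
            volume (Prod.snd '' ballI (d - 1) zb e r rs ρ ∩ E) := by
  obtain ⟨n, rfl⟩ : ∃ n, d = n + 1 := ⟨d - 1, by omega⟩
  exact main_n n (by omega)
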